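/- Under Assumption 2.1 and with the multiple empirical integrals I_k^{(n)} defined from the triangular array, let h = (h^{(k)})_{k≥0} ∈ H. Then there exists a nondecreasing sequence of positive integers K_n with K_n → ∞ such that lim_{m→∞} limsup_{n→∞} 𝔼[ ( Σ_{k=m+1}^{K_n} I_k^{(n)}(h^{(k)}) )² ] = 0. -/

import Mathlib

open MeasureTheory ProbabilityTheory Filter Topology
open scoped ENNReal NNReal

/-- **Assumption 2.1** of the paper, for data `(μ, a, P)`. -/
def Assumption21 {E : Type*} [MeasurableSpace E] (μ : Measure E) (a : ℕ → ℝ)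
    (P : ℕ → Measure E) : Prop :=
  μ Set.univ = ∞ ∧
  (∀ n : ℕ, 1 ≤ n → 0 < a n) ∧
  Tendsto a atTop atTop ∧
  Tendsto (fun n : ℕ => a n / n) atTop (𝓝 0) ∧
  (∀ B : Set E, MeasurableSet B → ∀ n : ℕ, 1 ≤ n →
    ENNReal.ofReal ((n : ℝ) / a n) * P n B ≤ ENNReal.ofReal (((n : ℝ) + 1) / a (n + 1)) * P (n + 1) B) ∧
  (∀ B : Set E, MeasurableSet B →
    Tendsto (fun n : ℕ => ENNReal.ofReal ((n : ℝ) / a n) * P n B) atTop (𝓝 (μ B)))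

/-- The positive (`true`) and negative (`false`) parts of the signed measure `√a · W_n`. -/
noncomputable def mixMeasure {E : Type*} [MeasurableSpace E] (P : Measure E) (n : ℕ)
    (X : Fin n → E) : Bool → Measure E
  | true => ∑ j : Fin n, Measure.dirac (X j)
  | false => (n : ℝ≥0) • P

/-- The multiple empirical integral `I_k^{(n)}(f)` for one realization `X` of the sample:
the integral of `f` over the off-diagonal set with respect to the `k`-fold product of the
signed measure `W_n = a^{-1/2} (Σ_j δ_{X_j} − n P)`, expanded multilinearly into its
positive and negative parts. -/
noncomputable def empInt {E : Type*} [MeasurableSpace E] (P : Measure E)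
    (n : ℕ) (a : ℝ) (X : Fin n → E) (k : ℕ) (f : (Fin k → E) → ℝ) : ℝ :=
  (Real.sqrt a)⁻¹ ^ k *
    ∑ ε : Fin k → Bool,
      (-1 : ℝ) ^ (Finset.univ.filter fun i => ε i = false).card *
        ∫ u in {u : Fin k → E | Function.Injective u}, f u
          ∂(Measure.pi fun i => mixMeasure P n X (ε i))

/-- The symmetrization `f̃` of a function of `k` variables. -/
noncomputable def symmetrize {E : Type*} (k : ℕ) (f : (Fin k → E) → ℝ) :
    (Fin k → E) → ℝ :=
  fun u => (k.factorial : ℝ)⁻¹ * ∑ σ : Equiv.Perm (Fin k), f (u ∘ σ)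

/-!
The integral `I_k` is expanded over partial injections `j` from the `k` slots to the `n` sample
indices: slot `l` receives the sample point of index `j l`, or is integrated out against `P_n`.
Möbius inversion over restrictions of `j` (Hoeffding's decomposition) rewrites the expansion in
terms of degenerate components, which are orthogonal as soon as they depend on different sets of
sample points. The coefficient of a component with `q` free slots is `O(n ^ (q / 2))` because the
contributions of `∑ i, δ (X i)` and `-n • P_n` cancel to leading order.

* The components without free slots are orthogonal across different `k`, and those of `I_k` have
  second moment at most `k! * ‖h̃ k‖²` in `L²(μ^k)`, since `(n / a_n) ^ k • P_n^k ≤ μ^k`.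
* A component with a free slot is an average in that slot. Splitting this slot along a set `B` of
  finite measure, Cauchy–Schwarz yields a factor `P_n B ≤ (a_n / n) * μ B → 0` on `B`, while off `B`
  only the mass of `(h k)²` off `B` remains. Hence these components vanish for each fixed `k`.

Letting `K_n` grow slowly enough makes the sum of the remainders over `k ≤ K_n` vanish as well, and
the tail of order `m` is at most twice the tail of the convergent series `∑ k! * ‖h̃ k‖²`.
-/

/-- A choice, for every slot `l : κ` of a function of `κ`-many variables, of a sample index to be
plugged into that slot, or of `none` if the slot is left free (to be integrated out). -/
abbrev SlotMap (κ ι : Type*) := κ → Option ι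

/-- The coefficients of the Hoeffding decomposition of an off-diagonal product of the signed measure
`∑ i, δ (X i) - n • P`: `hoeffdingCoeff n q c` sums the weights of all the ways to fill `q` free
slots when `c` of the `n` sample points are already in use. -/
def hoeffdingCoeff (n : ℕ) : ℕ → ℕ → ℝ
  | 0, _ => 1
  | q + 1, c => -(n : ℝ) * hoeffdingCoeff n q c + ((n : ℝ) - c) * hoeffdingCoeff n q (c + 1)

section HoeffdingCoeff

variable (n q c : ℕ)

lemma hoeffdingCoeff_zero : hoeffdingCoeff n 0 c = 1 := rfl

lemma hoeffdingCoeff_succ : hoeffdingCoeff n (q + 1) c =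
    -(n : ℝ) * hoeffdingCoeff n q c + ((n : ℝ) - c) * hoeffdingCoeff n q (c + 1) := rfl

lemma hoeffdingCoeff_one : hoeffdingCoeff n 1 c = -(c : ℝ) := by
  rw [hoeffdingCoeff_succ, hoeffdingCoeff_zero, hoeffdingCoeff_zero]
  ring

lemma hoeffdingCoeff_sub_succ : hoeffdingCoeff n (q + 1) c - hoeffdingCoeff n (q + 1) (c + 1) =
    (q + 1) * hoeffdingCoeff n q (c + 1) := by
  induction q generalizing c with
  | zero => simp only [zero_add, hoeffdingCoeff_one, hoeffdingCoeff_zero]; push_cast; ring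
  | succ q ih =>
    have rec₁ := hoeffdingCoeff_succ n (q + 1) c
    have rec₂ := hoeffdingCoeff_succ n (q + 1) (c + 1)
    have rec₃ := hoeffdingCoeff_succ n q (c + 1)
    have ih₁ := ih c
    have ih₂ := ih (c + 1)
    push_cast at *
    linear_combination rec₁ - rec₂ - (n : ℝ) * ih₁ + (n - (c + 1 : ℝ)) * ih₂ - (q + 1) * rec₃

/-- The recursion through which the cancellation is visible: each free slot costs only `√n`. -/
lemma hoeffdingCoeff_add_two : hoeffdingCoeff n (q + 2) c =
    -(c : ℝ) * hoeffdingCoeff n (q + 1) (c + 1) - n * (q + 1) * hoeffdingCoeff n q (c + 1) := by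
  linear_combination hoeffdingCoeff_succ n (q + 1) c - (n : ℝ) * hoeffdingCoeff_sub_succ n q c

lemma exists_hoeffdingCoeff_sq_le :
    ∃ C : ℝ, 0 ≤ C ∧ ∀ n : ℕ, 1 ≤ n → hoeffdingCoeff n q c ^ 2 ≤ C * (n : ℝ) ^ q := by
  induction q using Nat.twoStepInduction generalizing c with
  | zero => exact ⟨1, zero_le_one, fun n _ => by simp [hoeffdingCoeff_zero]⟩
  | one =>
    refine ⟨(c : ℝ) ^ 2, by positivity, fun n hn => ?_⟩
    rw [hoeffdingCoeff_one, neg_sq, pow_one]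
    exact le_mul_of_one_le_right (sq_nonneg _) (mod_cast hn)
  | more q ih₀ ih₁ =>
    obtain ⟨C₁, hC₁, bound₁⟩ := ih₁ (c + 1)
    obtain ⟨C₀, hC₀, bound₀⟩ := ih₀ (c + 1)
    refine ⟨2 * c ^ 2 * C₁ + 2 * (q + 1) ^ 2 * C₀, by positivity, fun n hn => ?_⟩
    have hn' : (1 : ℝ) ≤ n := mod_cast hn
    set x := hoeffdingCoeff n (q + 1) (c + 1)
    set y := hoeffdingCoeff n q (c + 1)
    calc hoeffdingCoeff n (q + 2) c ^ 2 = (-(c : ℝ) * x - n * (q + 1) * y) ^ 2 := by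
          rw [hoeffdingCoeff_add_two]
      _ ≤ 2 * c ^ 2 * x ^ 2 + 2 * (q + 1) ^ 2 * n ^ 2 * y ^ 2 := by
          nlinarith [sq_nonneg (-(c : ℝ) * x + n * (q + 1) * y)]
      _ ≤ 2 * c ^ 2 * (C₁ * n ^ (q + 1)) + 2 * (q + 1) ^ 2 * n ^ 2 * (C₀ * n ^ q) := by
          gcongr
          exacts [bound₁ n hn, bound₀ n hn]
      _ ≤ 2 * c ^ 2 * (C₁ * n ^ (q + 2)) + 2 * (q + 1) ^ 2 * n ^ 2 * (C₀ * n ^ q) := by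
          gcongr 2 * c ^ 2 * (C₁ * ?_) + _
          exact pow_le_pow_right₀ hn' (Nat.le_succ _)
      _ = (2 * c ^ 2 * C₁ + 2 * (q + 1) ^ 2 * C₀) * n ^ (q + 2) := by ring

lemma exists_forall_hoeffdingCoeff_sq_le (k : ℕ) : ∃ C : ℝ, ∀ n : ℕ, 1 ≤ n →
    ∀ q ≤ k, ∀ c ≤ k, hoeffdingCoeff n q c ^ 2 ≤ C * (n : ℝ) ^ q := by
  choose C hC bound using exists_hoeffdingCoeff_sq_le
  let box := Finset.range (k + 1) ×ˢ Finset.range (k + 1)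
  refine ⟨∑ p ∈ box, C p.1 p.2, fun n hn q hq c hc => (bound q c n hn).trans ?_⟩
  have hmem : (q, c) ∈ box := by simp only [box, Finset.mem_product, Finset.mem_range]; omega
  gcongr
  exact Finset.single_le_sum (f := fun p : ℕ × ℕ => C p.1 p.2) (fun p _ => hC _ _) hmem

end HoeffdingCoeff

open scoped Classical

namespace SlotMap

variable {κ ι : Type*} {j j' : SlotMap κ ι} {l : κ} {i : ι}

/-- No sample index is plugged into two different slots. -/
def IsInj (j : SlotMap κ ι) : Prop :=
  ∀ ⦃l₁ l₂ i⦄, j l₁ = some i → j l₂ = some i → l₁ = l₂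

/-- `j'` arises from `j` by freeing some slots. -/
def IsRestriction (j' j : SlotMap κ ι) : Prop :=
  ∀ l, j' l = none ∨ j' l = j l

lemma IsRestriction.isInj (h : IsRestriction j' j) (hj : IsInj j) : IsInj j' := by
  intro l l' i hl hl'
  have hjl : j l = some i := ((h l).resolve_left (by simp [hl])).symm.trans hl
  have hjl' : j l' = some i := ((h l').resolve_left (by simp [hl'])).symm.trans hl'
  exact hj hjl hjl'

/-- The one-slot Möbius kernel of the order on `Option ι` in which `none` lies below
everything and the `some i` are incomparable. -/
noncomputable def mobiusSign (o' o : Option ι) : ℝ :=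
  if o' = o then 1 else if o' = none then -1 else 0

lemma mobiusSign_self (o : Option ι) : mobiusSign o o = 1 := if_pos rfl

lemma mobiusSign_swap (o : Option ι) (i : ι) :
    mobiusSign (Equiv.swap none (some i) o) (some i) = -mobiusSign o (some i) := by
  rcases eq_or_ne o none with rfl | hnone
  · simp [mobiusSign]
  rcases eq_or_ne o (some i) with rfl | hsome
  · simp [mobiusSign]
  · simp [Equiv.swap_apply_of_ne_of_ne hnone hsome, mobiusSign, hnone, hsome]

lemma sum_mobiusSign_mul_ite [Fintype ι] (o' o : Option ι) :
    ∑ p : Option ι, mobiusSign o' p * (if p = none ∨ p = o then 1 else 0) =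
      if o' = o then 1 else 0 := by
  rw [Fintype.sum_option]
  rcases o with _ | i <;> rcases o' with _ | i' <;> simp [mobiusSign]

variable [Fintype κ]

/-- The sample indices plugged into some slot. -/
noncomputable def used (j : SlotMap κ ι) : Finset ι :=
  Finset.univ.biUnion fun l => (j l).toFinset

/-- The slots left free. -/
def freeSlots (j : SlotMap κ ι) : Finset κ := {l | j l = none}

lemma mem_used : i ∈ used j ↔ ∃ l, j l = some i := by simp [used]

lemma mem_freeSlots : l ∈ freeSlots j ↔ j l = none := by simp [freeSlots]

lemma IsRestriction.used_subset (h : IsRestriction j' j) : used j' ⊆ used j := by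
  intro i hi
  obtain ⟨l, hl⟩ := mem_used.1 hi
  exact mem_used.2 ⟨l, ((h l).resolve_left (by simp [hl])).symm.trans hl⟩

lemma used_update_some (hl : j l = none) :
    used (Function.update j l (some i)) = insert i (used j) := by
  ext i'
  simp only [mem_used, Finset.mem_insert]
  constructor
  · rintro ⟨l', hl'⟩
    rcases eq_or_ne l' l with rfl | hne
    · exact Or.inl (by simpa [eq_comm] using hl')
    · exact Or.inr ⟨l', by simpa [hne] using hl'⟩
  · rintro (rfl | ⟨l', hl'⟩)
    · exact ⟨l, Function.update_self ..⟩
    · have hne : l' ≠ l := by rintro rfl; simp [hl] at hl'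
      exact ⟨l', by simpa [hne] using hl'⟩

lemma IsInj.update_some (hj : IsInj j) (hi : i ∉ used j) :
    IsInj (Function.update j l (some i)) := by
  simp only [mem_used, not_exists] at hi
  intro l₁ l₂ i' h₁ h₂
  simp only [Function.update_apply] at h₁ h₂
  split_ifs at h₁ h₂ with hl₁ hl₂ hl₂
  · exact hl₁.trans hl₂.symm
  · exact absurd (h₂.trans h₁.symm) (hi l₂)
  · exact absurd (h₁.trans h₂.symm) (hi l₁)
  · exact hj h₁ h₂

lemma prod_mobiusSign_eq_zero (h : ¬IsRestriction j' j) : ∏ l, mobiusSign (j' l) (j l) = 0 := by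
  obtain ⟨l, hl⟩ := not_forall.1 h
  rw [not_or] at hl
  exact Finset.prod_eq_zero (Finset.mem_univ l) (by rw [mobiusSign, if_neg hl.2, if_neg hl.1])

variable [Fintype ι]

variable (κ ι) in
/-- The finite set of partial injections from slots to sample indices. -/
noncomputable def partialInj : Finset (SlotMap κ ι) := {j | IsInj j}

lemma mem_partialInj : j ∈ partialInj κ ι ↔ IsInj j := by simp [partialInj]

/-- The weight of a slot in the expansion of a power of `∑ i, δ (X i) - n • P`. -/
def slotWeight : Option ι → ℝ
  | none => -(Fintype.card ι : ℝ)
  | some _ => 1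

/-- The Möbius transform of `F` with respect to the restriction order on slot maps. -/
noncomputable def mobius (F : SlotMap κ ι → ℝ) (j : SlotMap κ ι) : ℝ :=
  ∑ j' : SlotMap κ ι, (∏ l, mobiusSign (j' l) (j l)) * F j'

lemma mobius_eq_sum_isRestriction (F : SlotMap κ ι → ℝ) (j : SlotMap κ ι) :
    mobius F j = ∑ j' with IsRestriction j' j, (∏ l, mobiusSign (j' l) (j l)) * F j' := by
  refine (Finset.sum_filter_of_ne fun j' _ hne => ?_).symm
  by_contra h
  exact hne (by rw [prod_mobiusSign_eq_zero h, zero_mul])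

lemma sum_mobius_restrictions (F : SlotMap κ ι → ℝ) (j : SlotMap κ ι) :
    ∑ j' with IsRestriction j' j, mobius F j' = F j := by
  have zeta_eq_prod (j' : SlotMap κ ι) : (if IsRestriction j' j then (1 : ℝ) else 0) =
      ∏ l, if j' l = none ∨ j' l = j l then 1 else 0 := by
    simp only [Finset.prod_ite_zero, Finset.prod_const_one, Finset.mem_univ, true_imp_iff]
    congr
  have kernel_comp (j'' : SlotMap κ ι) :
      ∑ j' : SlotMap κ ι, (∏ l, mobiusSign (j'' l) (j' l)) *
        (if IsRestriction j' j then 1 else 0) = if j'' = j then 1 else 0 := by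
    simp only [zeta_eq_prod, ← Finset.prod_mul_distrib]
    rw [← Fintype.prod_sum (f := fun l p => mobiusSign (j'' l) p *
      if p = none ∨ p = j l then 1 else 0)]
    simp only [sum_mobiusSign_mul_ite, Finset.prod_ite_zero, Finset.prod_const_one, funext_iff,
      Finset.mem_univ, true_imp_iff]
  calc ∑ j' with IsRestriction j' j, mobius F j'
      = ∑ j'' : SlotMap κ ι, (∑ j' : SlotMap κ ι, (∏ l, mobiusSign (j'' l) (j' l)) *
          (if IsRestriction j' j then 1 else 0)) * F j'' := by
        simp only [Finset.sum_filter, mobius, Finset.sum_mul]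
        rw [Finset.sum_comm]
        refine Finset.sum_congr rfl fun j' _ => ?_
        split_ifs <;> simp
    _ = F j := by simp only [kernel_comp, ite_mul, one_mul, zero_mul, Finset.sum_ite_eq',
        Finset.mem_univ, if_true]

lemma mobius_eq_zero_of_forall_update (hl : j l = some i) {F : SlotMap κ ι → ℝ}
    (hF : ∀ j', IsRestriction j' j → j' l = some i → F (Function.update j' l none) = F j') :
    mobius F j = 0 := by
  let toggle (j' : SlotMap κ ι) := Function.update j' l (Equiv.swap none (some i) (j' l))
  have sign_toggle (j' : SlotMap κ ι) :
      ∏ l', mobiusSign (toggle j' l') (j l') = -∏ l', mobiusSign (j' l') (j l') := by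
    rw [← Finset.mul_prod_erase _ _ (Finset.mem_univ l),
      ← Finset.mul_prod_erase _ (fun l' => mobiusSign (j' l') (j l')) (Finset.mem_univ l),
      Finset.prod_congr rfl fun l' hl' => by
        rw [show toggle j' l' = j' l' from Function.update_of_ne (Finset.ne_of_mem_erase hl') ..]]
    simp only [toggle, Function.update_self, hl, mobiusSign_swap, neg_mul]
  have F_toggle (j' : SlotMap κ ι) (h : IsRestriction j' j) : F (toggle j') = F j' := by
    rcases h l with hnone | hsome
    · have := hF (toggle j') (fun l' => ?_) (by simp [toggle, hnone])
      · rw [← this]; simp [toggle, ← hnone]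
      · rcases eq_or_ne l' l with rfl | hne
        · right; simp [toggle, hnone, hl]
        · simpa [toggle, hne] using h l'
    · rw [hl] at hsome
      simpa [toggle, hsome] using hF j' h hsome
  refine Finset.sum_involution (fun j' _ => toggle j') (fun j' _ => ?_) (fun j' _ hne heq => ?_)
    (fun _ _ => Finset.mem_univ _) (fun j' _ => by simp [toggle])
  · by_cases h : IsRestriction j' j
    · rw [sign_toggle, F_toggle j' h]; ring
    · rw [sign_toggle, prod_mobiusSign_eq_zero h]; ring
  · have := sign_toggle j'
    rw [heq] at this
    exact hne (by rw [self_eq_neg.1 this, zero_mul])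

lemma sum_fiber_insert_prod_slotWeight {Z : Finset κ} (hl : l ∉ Z) (j' : SlotMap κ ι)
    (o : Option ι) :
    ∑ j ∈ {j ∈ partialInj κ ι | ∀ l' ∉ insert l Z, j l' = j' l'} with j l = o,
        ∏ l' ∈ insert l Z, slotWeight (j l') =
      slotWeight o * ∑ j ∈ partialInj κ ι with ∀ l' ∉ Z, j l' = Function.update j' l o l',
        ∏ l' ∈ Z, slotWeight (j l') := by
  have fiber_eq (j : SlotMap κ ι) : ((∀ l' ∉ insert l Z, j l' = j' l') ∧ j l = o) ↔
      ∀ l' ∉ Z, j l' = Function.update j' l o l' := by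
    constructor
    · rintro ⟨hj, rfl⟩ l' hl'
      rcases eq_or_ne l' l with rfl | hne
      · simp
      · simpa [hne] using hj l' (by simp [hne, hl'])
    · intro hj
      refine ⟨fun l' hl' => ?_, by simpa using hj l hl⟩
      rw [Finset.mem_insert, not_or] at hl'
      simpa [hl'.1] using hj l' hl'.2
  simp only [Finset.filter_filter, fiber_eq, Finset.mul_sum]
  refine Finset.sum_congr rfl fun j hj => ?_
  rw [Finset.prod_insert hl, (Finset.mem_filter.1 hj).2 l hl, Function.update_self]

lemma extensions_update_some_eq_empty {Z : Finset κ} (hl : l ∉ Z)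
    (hZ : ∀ l' ∈ insert l Z, j' l' = none) (hi : i ∈ used j') :
    {j ∈ partialInj κ ι | ∀ l' ∉ Z, j l' = Function.update j' l (some i) l'} = ∅ := by
  refine Finset.filter_eq_empty_iff.2 fun j hj hext => ?_
  obtain ⟨l', hl'⟩ := mem_used.1 hi
  have notMem_insert : l' ∉ insert l Z := fun h => by simp [hZ l' h] at hl'
  rw [Finset.mem_insert, not_or] at notMem_insert
  obtain ⟨hne, hl'Z⟩ := notMem_insert
  exact hne (mem_partialInj.1 hj (by simpa [hne, hl'] using hext l' hl'Z)
    (by simpa using hext l hl))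

lemma sum_extensions_prod_slotWeight (Z : Finset κ) (hj' : IsInj j') (hZ : ∀ l ∈ Z, j' l = none) :
    ∑ j ∈ partialInj κ ι with ∀ l ∉ Z, j l = j' l, ∏ l ∈ Z, slotWeight (j l) =
      hoeffdingCoeff (Fintype.card ι) Z.card (used j').card := by
  induction Z using Finset.induction_on generalizing j' with
  | empty =>
    have : ({j ∈ partialInj κ ι | ∀ l ∉ (∅ : Finset κ), j l = j' l} : Finset _) = {j'} := by
      ext j
      simp only [Finset.mem_filter, mem_partialInj, Finset.notMem_empty, not_false_iff,
        true_imp_iff, Finset.mem_singleton, funext_iff, and_iff_right_iff_imp]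
      exact fun h => funext h ▸ hj'
    simp only [this, Finset.sum_singleton, Finset.prod_empty, Finset.card_empty,
      hoeffdingCoeff_zero]
  | insert l Z hl ih =>
    have hj'l : j' l = none := hZ l (Finset.mem_insert_self l Z)
    have hZ' : ∀ l' ∈ Z, j' l' = none := fun l' hl' => hZ l' (Finset.mem_insert_of_mem hl')
    have fiber_some (i : ι) : ∑ j ∈ partialInj κ ι with
        ∀ l' ∉ Z, j l' = Function.update j' l (some i) l', ∏ l' ∈ Z, slotWeight (j l') =
        if i ∈ used j' then 0 else
          hoeffdingCoeff (Fintype.card ι) Z.card ((used j').card + 1) := by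
      split_ifs with hi
      · rw [extensions_update_some_eq_empty hl hZ hi, Finset.sum_empty]
      · rw [ih (hj'.update_some hi) fun l' hl' => by
            rw [Function.update_of_ne (ne_of_mem_of_not_mem hl' hl), hZ' l' hl'],
          used_update_some hj'l, Finset.card_insert_of_notMem hi]
    rw [← Finset.sum_fiberwise (g := fun j : SlotMap κ ι => j l), Fintype.sum_option,
      Finset.card_insert_of_notMem hl, hoeffdingCoeff_succ]
    simp only [sum_fiber_insert_prod_slotWeight hl, fiber_some]
    rw [← hj'l, Function.update_eq_self, ih hj' hZ', hj'l]
    simp only [slotWeight, one_mul, Finset.sum_ite, Finset.sum_const_zero, zero_add,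
      Finset.sum_const, nsmul_eq_mul]
    rw [Finset.filter_not, Finset.filter_univ_mem, ← Finset.compl_eq_univ_sdiff, Finset.card_compl,
      Nat.cast_sub (Finset.card_le_univ _)]

lemma sum_isRestriction_prod_slotWeight (hj' : IsInj j') :
    ∑ j ∈ partialInj κ ι with IsRestriction j' j, ∏ l, slotWeight (j l) =
      hoeffdingCoeff (Fintype.card ι) (freeSlots j').card (used j').card := by
  rw [← sum_extensions_prod_slotWeight (freeSlots j') hj' fun l => mem_freeSlots.1]
  have restriction_iff (j : SlotMap κ ι) :
      IsRestriction j' j ↔ ∀ l ∉ freeSlots j', j l = j' l := by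
    simp only [IsRestriction, mem_freeSlots, or_iff_not_imp_left, eq_comm]
  simp only [restriction_iff]
  refine Finset.sum_congr rfl fun j hj => (Finset.prod_subset (Finset.subset_univ _) ?_).symm
  intro l _ hl
  rw [(Finset.mem_filter.1 hj).2 l hl]
  obtain ⟨i, hi⟩ := Option.ne_none_iff_exists'.1 (mt mem_freeSlots.2 hl)
  rw [hi, slotWeight]

theorem sum_partialInj_prod_slotWeight_mul (F : SlotMap κ ι → ℝ) :
    ∑ j ∈ partialInj κ ι, (∏ l, slotWeight (j l)) * F j =
      ∑ j ∈ partialInj κ ι,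
        hoeffdingCoeff (Fintype.card ι) (freeSlots j).card (used j).card * mobius F j := by
  have expand (j : SlotMap κ ι) : (∏ l, slotWeight (j l)) * F j =
      ∑ j' with IsRestriction j' j, (∏ l, slotWeight (j l)) * mobius F j' := by
    rw [← Finset.mul_sum, sum_mobius_restrictions]
  simp only [expand]
  rw [Finset.sum_comm' (t' := partialInj κ ι)
    (s' := fun j' => {j ∈ partialInj κ ι | IsRestriction j' j})]
  · refine Finset.sum_congr rfl fun j' hj' => ?_
    rw [← sum_isRestriction_prod_slotWeight (mem_partialInj.1 hj'), Finset.sum_mul]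
  · intro j j'
    simp only [Finset.mem_filter, Finset.mem_univ, true_and, mem_partialInj]
    exact ⟨fun ⟨hj, h⟩ => ⟨⟨hj, h⟩, h.isInj hj⟩, fun ⟨h, _⟩ => h⟩

end SlotMap

section SquareIntegrable

variable {α β : Type*} [MeasurableSpace α] [MeasurableSpace β] {ν : Measure α} {ρ : Measure β}
  {f g : α → ℝ}

lemma integral_comp_of_measurePreserving {T : α → β} (hT : MeasurePreserving T ν ρ) {F : β → ℝ}
    (hF : AEStronglyMeasurable F ρ) : ∫ x, F (T x) ∂ν = ∫ y, F y ∂ρ := by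
  rw [← hT.map_eq, integral_map hT.measurable.aemeasurable (by rwa [hT.map_eq])]

lemma sq_integral_le_measureReal_univ_mul [IsFiniteMeasure ν] (hf : MemLp f 2 ν) :
    (∫ x, f x ∂ν) ^ 2 ≤ ν.real Set.univ * ∫ x, f x ^ 2 ∂ν := by
  have hf₁ : Integrable f ν := hf.integrable one_le_two
  have nonneg (t : ℝ) : 0 ≤ ν.real Set.univ * (t * t) + (-2 * ∫ x, f x ∂ν) * t +
      ∫ x, f x ^ 2 ∂ν := by
    calc 0 ≤ ∫ x, (f x - t) ^ 2 ∂ν := integral_nonneg fun x => sq_nonneg _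
      _ = ∫ x, (f x ^ 2 + -2 * t * f x + t ^ 2) ∂ν := by congr 1; ext x; ring
      _ = ∫ x, f x ^ 2 ∂ν + -2 * t * ∫ x, f x ∂ν + ν.real Set.univ * t ^ 2 := by
        rw [integral_add (hf.integrable_sq.fun_add (hf₁.const_mul _)) (integrable_const _),
          integral_add hf.integrable_sq (hf₁.const_mul _), integral_const_mul, integral_const,
          smul_eq_mul]
      _ = _ := by ring
  have := discrim_le_zero nonneg
  unfold discrim at this
  linarith

lemma ae_memLp_two_prodMk_left [SFinite ν] [SFinite ρ] {F : α × β → ℝ}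
    (hF : MemLp F 2 (ν.prod ρ)) : ∀ᵐ x ∂ν, MemLp (fun y => F (x, y)) 2 ρ := by
  filter_upwards [hF.1.prodMk_left, hF.integrable_sq.prod_right_ae] with x hmeas hint
  exact (memLp_two_iff_integrable_sq hmeas).2 hint

lemma ae_sq_integral_prodMk_left_le [SFinite ν] [IsFiniteMeasure ρ] {F : α × β → ℝ}
    (hF : MemLp F 2 (ν.prod ρ)) :
    ∀ᵐ x ∂ν, (∫ y, F (x, y) ∂ρ) ^ 2 ≤ ρ.real Set.univ * ∫ y, F (x, y) ^ 2 ∂ρ := by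
  filter_upwards [ae_memLp_two_prodMk_left hF] with x hx using
    sq_integral_le_measureReal_univ_mul hx

lemma memLp_two_integral_prodMk_left [SFinite ν] [IsFiniteMeasure ρ] {F : α × β → ℝ}
    (hF : MemLp F 2 (ν.prod ρ)) : MemLp (fun x => ∫ y, F (x, y) ∂ρ) 2 ν := by
  have hmeas : AEStronglyMeasurable (fun x => ∫ y, F (x, y) ∂ρ) ν := hF.1.integral_prod_right'
  rw [memLp_two_iff_integrable_sq hmeas]
  refine (hF.integrable_sq.integral_prod_left.const_mul (ρ.real Set.univ)).mono' (hmeas.pow 2) ?_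
  filter_upwards [ae_sq_integral_prodMk_left_le hF] with x hx
  rwa [Real.norm_of_nonneg (sq_nonneg _)]

lemma integral_sq_integral_prodMk_left_le [SFinite ν] [IsFiniteMeasure ρ] {F : α × β → ℝ}
    (hF : MemLp F 2 (ν.prod ρ)) :
    ∫ x, (∫ y, F (x, y) ∂ρ) ^ 2 ∂ν ≤ ρ.real Set.univ * ∫ p, F p ^ 2 ∂ν.prod ρ := by
  rw [integral_prod _ hF.integrable_sq, ← integral_const_mul]
  exact integral_mono_ae (memLp_two_integral_prodMk_left hF).integrable_sq
    (hF.integrable_sq.integral_prod_left.const_mul _) (ae_sq_integral_prodMk_left_le hF)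

lemma integral_sq_add_le (hf : MemLp f 2 ν) (hg : MemLp g 2 ν) :
    ∫ x, (f x + g x) ^ 2 ∂ν ≤ 2 * ∫ x, f x ^ 2 ∂ν + 2 * ∫ x, g x ^ 2 ∂ν := by
  rw [← mul_add, ← integral_add hf.integrable_sq hg.integrable_sq, ← integral_const_mul]
  exact integral_mono (hf.add hg).integrable_sq
    ((hf.integrable_sq.add hg.integrable_sq).const_mul 2) fun x => add_sq_le

lemma integral_sq_integral_prodMk_left_le_add_compl [SFinite ν] [IsFiniteMeasure ρ]
    {F : α × β → ℝ} (hF : MemLp F 2 (ν.prod ρ)) {S : Set β} (hS : MeasurableSet S) :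
    ∫ x, (∫ y, F (x, y) ∂ρ) ^ 2 ∂ν ≤
      2 * (ρ.real S * ∫ p in Set.univ ×ˢ S, F p ^ 2 ∂ν.prod ρ) +
        2 * (ρ.real Sᶜ * ∫ p in Set.univ ×ˢ Sᶜ, F p ^ 2 ∂ν.prod ρ) := by
  have prod_restrict (T : Set β) : (ν.prod ρ).restrict (Set.univ ×ˢ T) = ν.prod (ρ.restrict T) := by
    rw [← Measure.prod_restrict, Measure.restrict_univ]
  have memLp_restrict (T : Set β) : MemLp F 2 (ν.prod (ρ.restrict T)) :=
    prod_restrict T ▸ hF.restrict _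
  have memLp_integral (T : Set β) := memLp_two_integral_prodMk_left (memLp_restrict T)
  have bound (T : Set β) := integral_sq_integral_prodMk_left_le (memLp_restrict T)
  simp only [← prod_restrict, measureReal_restrict_apply_univ] at bound
  have split : (fun x => (∫ y, F (x, y) ∂ρ) ^ 2) =ᵐ[ν]
      fun x => (∫ y in S, F (x, y) ∂ρ + ∫ y in Sᶜ, F (x, y) ∂ρ) ^ 2 := by
    filter_upwards [ae_memLp_two_prodMk_left hF] with x hx
    rw [integral_add_compl hS (hx.integrable one_le_two)]
  rw [integral_congr_ae split]
  refine (integral_sq_add_le (memLp_integral S) (memLp_integral Sᶜ)).trans ?_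
  gcongr <;> exact bound _

lemma integral_sq_le_of_integral_mul_self_eq (hg : MemLp g 2 ν) (hf : MemLp f 2 ν)
    (hproj : ∫ x, g x * g x ∂ν = ∫ x, g x * f x ∂ν) :
    ∫ x, g x ^ 2 ∂ν ≤ ∫ x, f x ^ 2 ∂ν := by
  have hgf : Integrable (fun x => g x * f x) ν := hg.integrable_mul hf
  have hgg : Integrable (fun x => g x * g x) ν := hg.integrable_mul hg
  have expand : ∫ x, (f x - g x) ^ 2 ∂ν = ∫ x, f x ^ 2 ∂ν - ∫ x, g x ^ 2 ∂ν := by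
    calc ∫ x, (f x - g x) ^ 2 ∂ν
        = ∫ x, (f x ^ 2 + g x * g x + -2 * (g x * f x)) ∂ν := by congr 1; ext x; ring
      _ = ∫ x, f x ^ 2 ∂ν - ∫ x, g x * g x ∂ν := by
        rw [integral_add (hf.integrable_sq.fun_add hgg) (hgf.const_mul _),
          integral_add hf.integrable_sq hgg, integral_const_mul, ← hproj]
        ring
      _ = ∫ x, f x ^ 2 ∂ν - ∫ x, g x ^ 2 ∂ν := by simp only [sq]
  rw [← sub_nonneg, ← expand]
  exact integral_nonneg fun x => sq_nonneg _

lemma integral_sum_mul_sum {η θ : Type*} {s : Finset η} {t : Finset θ} {u : η → α → ℝ}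
    {v : θ → α → ℝ} (hu : ∀ r ∈ s, MemLp (u r) 2 ν) (hv : ∀ r ∈ t, MemLp (v r) 2 ν) :
    ∫ x, (∑ r ∈ s, u r x) * ∑ r' ∈ t, v r' x ∂ν =
      ∑ r ∈ s, ∑ r' ∈ t, ∫ x, u r x * v r' x ∂ν := by
  have hint (r) (hr : r ∈ s) (r') (hr' : r' ∈ t) : Integrable (fun x => u r x * v r' x) ν :=
    (hu r hr).integrable_mul (hv r' hr')
  simp only [Finset.sum_mul_sum]
  rw [integral_finsetSum _ fun r hr => integrable_finsetSum _ (hint r hr)]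
  exact Finset.sum_congr rfl fun r hr => integral_finsetSum _ (hint r hr)

lemma integral_sq_sum_of_orthogonal {η : Type*} {s : Finset η} {u : η → α → ℝ}
    (hu : ∀ r ∈ s, MemLp (u r) 2 ν)
    (horth : ∀ r ∈ s, ∀ r' ∈ s, r ≠ r' → ∫ x, u r x * u r' x ∂ν = 0) :
    ∫ x, (∑ r ∈ s, u r x) ^ 2 ∂ν = ∑ r ∈ s, ∫ x, u r x ^ 2 ∂ν := by
  simp only [sq]
  rw [integral_sum_mul_sum hu hu]
  refine Finset.sum_congr rfl fun r hr => Finset.sum_eq_single_of_mem r hr fun r' hr' hne => ?_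
  exact horth r hr r' hr' hne.symm

lemma integral_sq_sum_le_card_mul_sum {η : Type*} {s : Finset η} {u : η → α → ℝ}
    (hu : ∀ r ∈ s, MemLp (u r) 2 ν) :
    ∫ x, (∑ r ∈ s, u r x) ^ 2 ∂ν ≤ s.card * ∑ r ∈ s, ∫ x, u r x ^ 2 ∂ν := by
  have hint : ∀ r ∈ s, Integrable (fun x => u r x ^ 2) ν := fun r hr => (hu r hr).integrable_sq
  rw [← integral_finsetSum _ hint, ← integral_const_mul]
  exact integral_mono (memLp_finsetSum _ hu).integrable_sq
    ((integrable_finsetSum _ hint).const_mul _) fun x => sq_sum_le_card_mul_sum_sq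

end SquareIntegrable

/-- The law of an i.i.d. family indexed by `κ` with marginal `P`. -/
noncomputable abbrev piPow {E : Type*} [MeasurableSpace E] (P : Measure E) (κ : Type*) [Fintype κ] :
    Measure (κ → E) := Measure.pi fun _ : κ => P

lemma measurePreserving_piPow_comp {E κ ι : Type*} [MeasurableSpace E] [Fintype κ] [Fintype ι]
    (P : Measure E) [IsProbabilityMeasure P] {φ : κ → ι} (hφ : Function.Injective φ) :
    MeasurePreserving (fun z : ι → E => z ∘ φ) (piPow P ι) (piPow P κ) := by
  refine ⟨by fun_prop, ?_⟩
  have indep : iIndepFun (fun (i : ι) (z : ι → E) => z i) (piPow P ι) :=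
    iIndepFun_pi (X := fun _ => id) fun _ => aemeasurable_id
  have map_eq := (iIndepFun_iff_map_fun_eq_pi_map
    fun l => (measurable_pi_apply (φ l)).aemeasurable).1 (indep.precomp hφ)
  refine map_eq.trans (congrArg Measure.pi (funext fun l => ?_))
  exact (measurePreserving_eval (fun _ : ι => P) (φ l)).map_eq

lemma measurePreserving_sumElim {E κ ι : Type*} [MeasurableSpace E] [Fintype κ] [Fintype ι]
    (P : Measure E) [SigmaFinite P] :
    MeasurePreserving (fun p : (ι → E) × (κ → E) => Sum.elim p.1 p.2)
      ((piPow P ι).prod (piPow P κ)) (piPow P (ι ⊕ κ)) := by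
  convert measurePreserving_sumPiEquivProdPi_symm (X := fun _ : ι ⊕ κ => E) fun _ => P using 1
  ext p (i | l) <;> rfl

namespace SlotMap

variable {E κ ι : Type*} {j j' : SlotMap κ ι} {l : κ} {i : ι}

/-- The point of `E^κ` whose slot `l` holds the sample point `x i` if `j l = some i`, and `y l` if
`l` is free. -/
def fill (j : SlotMap κ ι) (x : ι → E) (y : κ → E) : κ → E := fun l => (j l).elim (y l) x

/-- The coordinate of the concatenation of `x` and `y` that `fill j x y` reads in slot `l`. -/
def source (j : SlotMap κ ι) (l : κ) : ι ⊕ κ := (j l).elim (Sum.inr l) Sum.inl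

lemma sumElim_comp_source (j : SlotMap κ ι) (x : ι → E) (y : κ → E) :
    Sum.elim x y ∘ source j = fill j x y := by
  ext l
  cases h : j l <;> simp [source, fill, h]

lemma IsInj.source_injective (hj : IsInj j) : Function.Injective (source j) := by
  intro l l' h
  cases hl : j l <;> cases hl' : j l' <;>
    simp only [source, hl, hl', Option.elim, Sum.inr.injEq, Sum.inl.injEq, reduceCtorEq] at h
  · exact h
  · exact hj hl (h ▸ hl')

lemma fill_congr_of_used [Fintype κ] {x x' : ι → E} (h : ∀ i ∈ used j, x i = x' i) (y : κ → E) :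
    fill j x y = fill j x' y := by
  ext l
  cases hl : j l with
  | none => simp [fill, hl]
  | some i => simpa [fill, hl] using h i (mem_used.2 ⟨l, hl⟩)

lemma source_swap (hj : IsInj j) (hl : j l = some i) (l' : κ) :
    Equiv.swap (Sum.inl i) (Sum.inr l) (source j l') = source (Function.update j l none) l' := by
  rcases eq_or_ne l' l with rfl | hne
  · simp [source, hl]
  cases hl' : j l' with
  | none => simp [source, hne, hl', Equiv.swap_apply_of_ne_of_ne]
  | some i' =>
    have hi : i' ≠ i := by rintro rfl; exact hne (hj hl' hl)
    simp [source, hne, hl', hi, Equiv.swap_apply_of_ne_of_ne]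

lemma isRestriction_update_none (j : SlotMap κ ι) (l : κ) :
    IsRestriction (Function.update j l none) j := by
  intro l'
  rcases eq_or_ne l' l with rfl | hne
  · simp
  · simp [hne]

lemma IsRestriction.exists_mem_used_notMem [Fintype κ] (h : IsRestriction j' j) (hj : IsInj j)
    (hne : j' ≠ j) : ∃ i ∈ used j, i ∉ used j' := by
  obtain ⟨l, hl⟩ := Function.ne_iff.1 hne
  have hnone : j' l = none := (h l).resolve_right hl
  obtain ⟨i, hi⟩ := Option.ne_none_iff_exists'.1 fun hjl => hl (hnone.trans hjl.symm)
  refine ⟨i, mem_used.2 ⟨l, hi⟩, fun hi' => ?_⟩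
  obtain ⟨l', hl'⟩ := mem_used.1 hi'
  have : l' = l := hj (((h l').resolve_left (by simp [hl'])).symm.trans hl') hi
  simp [← this, hl'] at hnone

variable [MeasurableSpace E] [Fintype κ]

/-- `f` with the sample points `x` plugged in according to `j` and the free slots integrated out
against `P`. -/
noncomputable def partialIntegral (P : Measure E) (f : (κ → E) → ℝ) (j : SlotMap κ ι) (x : ι → E) :
    ℝ :=
  ∫ y, f (fill j x y) ∂piPow P κ

/-- The completely degenerate component in the Hoeffding decomposition of `partialIntegral P f j`:
it has mean zero in every sample point it depends on. -/
noncomputable def hoeffdingPart [Fintype ι] (P : Measure E) (f : (κ → E) → ℝ) (j : SlotMap κ ι)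
    (x : ι → E) : ℝ :=
  mobius (fun j' => partialIntegral P f j' x) j

lemma dependsOn_partialIntegral (P : Measure E) (f : (κ → E) → ℝ) (j : SlotMap κ ι) :
    DependsOn (partialIntegral P f j) (used j) := fun x x' h => by
  unfold partialIntegral
  congr with y
  rw [fill_congr_of_used h]

variable [Fintype ι]

lemma dependsOn_hoeffdingPart (P : Measure E) (f : (κ → E) → ℝ) (j : SlotMap κ ι) :
    DependsOn (hoeffdingPart P f j) (used j) := fun x x' h => by
  simp only [hoeffdingPart, mobius_eq_sum_isRestriction]
  refine Finset.sum_congr rfl fun j' hj' => congrArg _ ?_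
  have : used j' ⊆ used j := (Finset.mem_filter.1 hj').2.used_subset
  exact dependsOn_partialIntegral P f j' fun i hi => h i (this hi)

variable {P : Measure E} [IsProbabilityMeasure P] {f : (κ → E) → ℝ}

lemma IsInj.measurePreserving_fill (hj : IsInj j) (P : Measure E) [IsProbabilityMeasure P] :
    MeasurePreserving (fun p : (ι → E) × (κ → E) => fill j p.1 p.2)
      ((piPow P ι).prod (piPow P κ)) (piPow P κ) := by
  simp only [← sumElim_comp_source]
  exact (measurePreserving_piPow_comp P hj.source_injective).comp (measurePreserving_sumElim P)

lemma IsInj.memLp_comp_fill (hj : IsInj j) (hf : MemLp f 2 (piPow P κ)) :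
    MemLp (fun p : (ι → E) × (κ → E) => f (fill j p.1 p.2)) 2 ((piPow P ι).prod (piPow P κ)) :=
  hf.comp_measurePreserving (hj.measurePreserving_fill P)

lemma IsInj.memLp_partialIntegral (hj : IsInj j) (hf : MemLp f 2 (piPow P κ)) :
    MemLp (partialIntegral P f j) 2 (piPow P ι) :=
  memLp_two_integral_prodMk_left (hj.memLp_comp_fill hf)

lemma IsInj.memLp_hoeffdingPart (hj : IsInj j) (hf : MemLp f 2 (piPow P κ)) :
    MemLp (hoeffdingPart P f j) 2 (piPow P ι) := by
  unfold hoeffdingPart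
  simp only [mobius_eq_sum_isRestriction]
  refine memLp_finsetSum _ fun j' hj' => MemLp.const_mul ?_ _
  exact ((Finset.mem_filter.1 hj').2.isInj hj).memLp_partialIntegral hf

lemma IsInj.integrable_comp_source_mul (hj : IsInj j) (hf : MemLp f 2 (piPow P κ))
    {g : (ι → E) → ℝ} (hg : MemLp g 2 (piPow P ι)) :
    Integrable (fun z => f (z ∘ source j) * g (z ∘ Sum.inl)) (piPow P (ι ⊕ κ)) :=
  (hf.comp_measurePreserving (measurePreserving_piPow_comp P hj.source_injective)).integrable_mul
    (hg.comp_measurePreserving (measurePreserving_piPow_comp P Sum.inl_injective))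

lemma IsInj.integral_partialIntegral_mul (hj : IsInj j) (hf : MemLp f 2 (piPow P κ))
    {g : (ι → E) → ℝ} (hg : MemLp g 2 (piPow P ι)) :
    ∫ x, partialIntegral P f j x * g x ∂piPow P ι =
      ∫ z, f (z ∘ source j) * g (z ∘ Sum.inl) ∂piPow P (ι ⊕ κ) := by
  have hint := hj.integrable_comp_source_mul hf hg
  have glue := measurePreserving_sumElim (κ := κ) (ι := ι) P
  have hint_prod := glue.integrable_comp_of_integrable hint
  simp only [Function.comp_def (fun z => f (z ∘ source j) * g (z ∘ Sum.inl)),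
    sumElim_comp_source, Sum.elim_comp_inl] at hint_prod
  rw [← integral_comp_of_measurePreserving glue hint.1]
  simp only [sumElim_comp_source, Sum.elim_comp_inl]
  rw [integral_prod _ hint_prod]
  simp only [integral_mul_const, partialIntegral]

/-- Exchanging the sample point `i` with the integration variable of slot `l` preserves the
joint law. -/
lemma IsInj.integral_partialIntegral_update_none_mul (hj : IsInj j) (hf : MemLp f 2 (piPow P κ))
    {g : (ι → E) → ℝ} (hg : MemLp g 2 (piPow P ι)) {s : Set ι} (hgs : DependsOn g s) (hi : i ∉ s)
    (hl : j l = some i) :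
    ∫ x, partialIntegral P f (Function.update j l none) x * g x ∂piPow P ι =
      ∫ x, partialIntegral P f j x * g x ∂piPow P ι := by
  have hj_update := (isRestriction_update_none j l).isInj hj
  rw [hj.integral_partialIntegral_mul hf hg, hj_update.integral_partialIntegral_mul hf hg]
  let swap : Equiv.Perm (ι ⊕ κ) := Equiv.swap (Sum.inl i) (Sum.inr l)
  have f_swap (z : ι ⊕ κ → E) :
      f ((z ∘ swap) ∘ source j) = f (z ∘ source (Function.update j l none)) := by
    congr 1
    ext l'
    exact congrArg z (source_swap hj hl l')
  have g_swap (z : ι ⊕ κ → E) : g ((z ∘ swap) ∘ Sum.inl) = g (z ∘ Sum.inl) := by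
    refine hgs fun i' hi' => congrArg z ?_
    exact Equiv.swap_apply_of_ne_of_ne (by simpa using ne_of_mem_of_not_mem hi' hi) (by simp)
  rw [← integral_comp_of_measurePreserving (measurePreserving_piPow_comp P swap.injective)
    (hj.integrable_comp_source_mul hf hg).1]
  simp only [f_swap, g_swap]

lemma IsInj.integral_hoeffdingPart_mul_eq_zero (hj : IsInj j) (hf : MemLp f 2 (piPow P κ))
    {g : (ι → E) → ℝ} (hg : MemLp g 2 (piPow P ι)) {s : Set ι} (hgs : DependsOn g s)
    (hi : i ∈ used j) (his : i ∉ s) : ∫ x, hoeffdingPart P f j x * g x ∂piPow P ι = 0 := by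
  obtain ⟨l, hl⟩ := mem_used.1 hi
  have hmobius : ∫ x, hoeffdingPart P f j x * g x ∂piPow P ι =
      mobius (fun j' => ∫ x, partialIntegral P f j' x * g x ∂piPow P ι) j := by
    simp only [hoeffdingPart, mobius_eq_sum_isRestriction, Finset.sum_mul, mul_assoc]
    rw [integral_finsetSum]
    · simp only [integral_const_mul]
    · intro j' hj'
      have hj'_inj := (Finset.mem_filter.1 hj').2.isInj hj
      exact ((hj'_inj.memLp_partialIntegral hf).integrable_mul hg).const_mul _
  rw [hmobius]
  exact mobius_eq_zero_of_forall_update hl fun j' hj' hl' =>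
    (hj'.isInj hj).integral_partialIntegral_update_none_mul hf hg hgs his hl'

section TwoKernels

variable {κ' : Type*} [Fintype κ'] {f' : (κ' → E) → ℝ} {j₁ : SlotMap κ' ι}

lemma IsInj.integral_hoeffdingPart_mul_hoeffdingPart_eq_zero (hj : IsInj j) (hj₁ : IsInj j₁)
    (hf : MemLp f 2 (piPow P κ)) (hf' : MemLp f' 2 (piPow P κ')) (hne : used j ≠ used j₁) :
    ∫ x, hoeffdingPart P f j x * hoeffdingPart P f' j₁ x ∂piPow P ι = 0 := by
  rcases not_and_or.1
      (mt (fun h : used j ⊆ used j₁ ∧ used j₁ ⊆ used j => h.1.antisymm h.2) hne) with h | h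
  · obtain ⟨i, hi, hi₁⟩ := Finset.not_subset.1 h
    exact hj.integral_hoeffdingPart_mul_eq_zero hf (hj₁.memLp_hoeffdingPart hf')
      (dependsOn_hoeffdingPart P f' j₁) hi hi₁
  · obtain ⟨i, hi₁, hi⟩ := Finset.not_subset.1 h
    simpa only [mul_comm] using hj₁.integral_hoeffdingPart_mul_eq_zero hf'
      (hj.memLp_hoeffdingPart hf) (dependsOn_hoeffdingPart P f j) hi₁ hi

lemma IsInj.integral_hoeffdingPart_mul_hoeffdingPart (hj : IsInj j) (hj₁ : IsInj j₁)
    (hf : MemLp f 2 (piPow P κ)) (hf' : MemLp f' 2 (piPow P κ')) (heq : used j = used j₁) :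
    ∫ x, hoeffdingPart P f j x * hoeffdingPart P f' j₁ x ∂piPow P ι =
      ∫ x, hoeffdingPart P f j x * partialIntegral P f' j₁ x ∂piPow P ι := by
  have hmemLp (j') (hj' : j' ∈ ({j' | IsRestriction j' j₁} : Finset (SlotMap κ' ι))) :
      MemLp (partialIntegral P f' j') 2 (piPow P ι) :=
    ((Finset.mem_filter.1 hj').2.isInj hj₁).memLp_partialIntegral hf'
  have hself : j₁ ∈ ({j' | IsRestriction j' j₁} : Finset (SlotMap κ' ι)) :=
    Finset.mem_filter.2 ⟨Finset.mem_univ _, fun l => Or.inr rfl⟩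
  calc ∫ x, hoeffdingPart P f j x * hoeffdingPart P f' j₁ x ∂piPow P ι
      = ∑ j' with IsRestriction j' j₁, (∏ l, mobiusSign (j' l) (j₁ l)) *
          ∫ x, hoeffdingPart P f j x * partialIntegral P f' j' x ∂piPow P ι := by
        simp only [hoeffdingPart.eq_1 P f' j₁, mobius_eq_sum_isRestriction, Finset.mul_sum,
          mul_left_comm (hoeffdingPart P f j _)]
        rw [integral_finsetSum]
        · simp only [integral_const_mul]
        · exact fun j' hj' =>
            ((hj.memLp_hoeffdingPart hf).integrable_mul (hmemLp j' hj')).const_mul _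
    _ = ∫ x, hoeffdingPart P f j x * partialIntegral P f' j₁ x ∂piPow P ι := by
        rw [Finset.sum_eq_single_of_mem j₁ hself]
        · simp only [mobiusSign_self, Finset.prod_const_one, one_mul]
        · intro j' hj' hne
          obtain ⟨i, hi, hi'⟩ := (Finset.mem_filter.1 hj').2.exists_mem_used_notMem hj₁ hne
          rw [hj.integral_hoeffdingPart_mul_eq_zero hf (hmemLp j' hj')
            (dependsOn_partialIntegral P f' j') (heq ▸ hi) hi', mul_zero]

end TwoKernels

lemma integral_sq_sum_hoeffdingPart_le {A : Finset (SlotMap κ ι)} {R : Finset ι}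
    (hA : ∀ j ∈ A, IsInj j ∧ used j = R) (hf : MemLp f 2 (piPow P κ)) :
    ∫ x, (∑ j ∈ A, hoeffdingPart P f j x) ^ 2 ∂piPow P ι ≤
      ∫ x, (∑ j ∈ A, partialIntegral P f j x) ^ 2 ∂piPow P ι := by
  have hpart : ∀ j ∈ A, MemLp (hoeffdingPart P f j) 2 (piPow P ι) :=
    fun j hj => (hA j hj).1.memLp_hoeffdingPart hf
  have hint : ∀ j ∈ A, MemLp (partialIntegral P f j) 2 (piPow P ι) :=
    fun j hj => (hA j hj).1.memLp_partialIntegral hf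
  refine integral_sq_le_of_integral_mul_self_eq (memLp_finsetSum _ hpart)
    (memLp_finsetSum _ hint) ?_
  rw [integral_sum_mul_sum hpart hpart, integral_sum_mul_sum hpart hint]
  refine Finset.sum_congr rfl fun j hj => Finset.sum_congr rfl fun j' hj' => ?_
  exact (hA j hj).1.integral_hoeffdingPart_mul_hoeffdingPart (hA j' hj').1 hf hf
    ((hA j hj).2.trans (hA j' hj').2.symm)

lemma IsInj.integral_sq_hoeffdingPart_le (hj : IsInj j) (hf : MemLp f 2 (piPow P κ)) :
    ∫ x, hoeffdingPart P f j x ^ 2 ∂piPow P ι ≤ ∫ x, partialIntegral P f j x ^ 2 ∂piPow P ι := by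
  simpa only [Finset.sum_singleton] using integral_sq_sum_hoeffdingPart_le (A := {j})
    (R := used j) (by simpa using hj) hf

lemma IsInj.setIntegral_sq_comp_fill (hj : IsInj j) (hf : MemLp f 2 (piPow P κ))
    (hl : j l = none) {B : Set E} (hB : MeasurableSet B) :
    ∫ p in Set.univ ×ˢ {y : κ → E | y l ∈ B}, f (fill j p.1 p.2) ^ 2
        ∂(piPow P ι).prod (piPow P κ) =
      ∫ u in {u | u l ∈ B}, f u ^ 2 ∂piPow P κ := by
  have hS : MeasurableSet {u : κ → E | u l ∈ B} := measurable_pi_apply l hB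
  have hpre : (fun p : (ι → E) × (κ → E) => fill j p.1 p.2) ⁻¹' {u | u l ∈ B} =
      Set.univ ×ˢ {y | y l ∈ B} := by
    ext p
    simp [fill, hl]
  rw [← hpre]
  exact integral_comp_of_measurePreserving ((hj.measurePreserving_fill P).restrict_preimage hS)
    hf.integrable_sq.1.restrict

lemma IsInj.integral_sq_partialIntegral_le (hj : IsInj j) (hf : MemLp f 2 (piPow P κ))
    (hl : j l = none) {B : Set E} (hB : MeasurableSet B) :
    ∫ x, partialIntegral P f j x ^ 2 ∂piPow P ι ≤ 2 * P.real B * ∫ u, f u ^ 2 ∂piPow P κ +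
      2 * ∫ u in {u | u l ∉ B}, f u ^ 2 ∂piPow P κ := by
  have hS : MeasurableSet {u : κ → E | u l ∈ B} := measurable_pi_apply l hB
  have measure_slab : (piPow P κ).real {u | u l ∈ B} = P.real B :=
    (measurePreserving_eval (fun _ : κ => P) l).measureReal_preimage hB.nullMeasurableSet
  have split := integral_sq_integral_prodMk_left_le_add_compl (hj.memLp_comp_fill hf) hS
  have slab := hj.setIntegral_sq_comp_fill hf hl hB
  have slab_compl := hj.setIntegral_sq_comp_fill hf hl hB.compl
  have slab_le : ∫ u in {u | u l ∈ B}, f u ^ 2 ∂piPow P κ ≤ ∫ u, f u ^ 2 ∂piPow P κ :=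
    setIntegral_le_integral hf.integrable_sq (ae_of_all _ fun u => sq_nonneg _)
  have compl_nonneg : 0 ≤ ∫ u in {u | u l ∈ Bᶜ}, f u ^ 2 ∂piPow P κ :=
    integral_nonneg fun u => sq_nonneg _
  rw [measure_slab, slab, Set.compl_ofPred] at split
  refine split.trans (add_le_add ?_ ?_)
  · rw [mul_assoc]
    gcongr
  · refine mul_le_mul_of_nonneg_left ?_ zero_le_two
    exact (congrArg _ slab_compl).trans_le (mul_le_of_le_one_left compl_nonneg measureReal_le_one)

end SlotMap

lemma memLp_symmetrize {E : Type*} [MeasurableSpace E] {ν : Measure E} [SigmaFinite ν] {k : ℕ}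
    {f : (Fin k → E) → ℝ} (hf : MemLp f 2 (piPow ν (Fin k))) :
    MemLp (symmetrize k f) 2 (piPow ν (Fin k)) := by
  have permute (σ : Equiv.Perm (Fin k)) :
      MeasurePreserving (fun u : Fin k → E => u ∘ σ) (piPow ν (Fin k)) (piPow ν (Fin k)) :=
    (measurePreserving_piCongrLeft (fun _ : Fin k => ν) σ).symm
  exact (memLp_finsetSum _ fun σ _ => hf.comp_measurePreserving (permute σ)).const_mul _

namespace SlotMap

variable {E κ ι : Type*} [Fintype κ] {j : SlotMap κ ι}

lemma card_used_le (j : SlotMap κ ι) : (used j).card ≤ Fintype.card κ := by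
  refine Finset.card_biUnion_le_card_mul _ _ 1 (fun l _ => ?_) |>.trans_eq (mul_one _)
  cases j l <;> simp

lemma sum_pow_card_freeSlots [Fintype ι] (t : ℝ) :
    ∑ j : SlotMap κ ι, t ^ (freeSlots j).card = (t + Fintype.card ι) ^ Fintype.card κ := by
  have pow_eq_prod (j : SlotMap κ ι) :
      t ^ (freeSlots j).card = ∏ l, if j l = none then t else 1 := by
    rw [Finset.prod_ite, Finset.prod_const, Finset.prod_const_one, mul_one]
    rfl
  simp only [pow_eq_prod]
  rw [← Fintype.prod_sum fun (_ : κ) (o : Option ι) => if o = none then t else 1]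
  simp

lemma card_filter_used_eq_le [Fintype ι] (R : Finset ι) :
    ({j | used j = R} : Finset (SlotMap κ ι)).card ≤ (Fintype.card κ + 1) ^ Fintype.card κ := by
  rcases ({j | used j = R} : Finset (SlotMap κ ι)).eq_empty_or_nonempty with hempty | ⟨j₀, hj₀⟩
  · simp [hempty]
  have hR : R.card ≤ Fintype.card κ := (Finset.mem_filter.1 hj₀).2 ▸ card_used_le j₀
  have values_mem : ({j | used j = R} : Finset (SlotMap κ ι)) ⊆
      Fintype.piFinset fun _ : κ => Finset.insertNone R := by
    intro j hj
    rw [Fintype.mem_piFinset]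
    intro l
    rw [Finset.mem_insertNone, ← (Finset.mem_filter.1 hj).2]
    exact fun i hi => mem_used.2 ⟨l, hi⟩
  refine (Finset.card_le_card values_mem).trans ?_
  rw [Fintype.card_piFinset, Finset.prod_const, Finset.card_insertNone, Finset.card_univ]
  gcongr

variable (κ ι) in
/-- The slot maps that plug distinct sample indices into all the slots. -/
noncomputable def fullInj [Fintype ι] : Finset (SlotMap κ ι) :=
  {j ∈ partialInj κ ι | freeSlots j = ∅}

variable (κ ι) in
/-- The slot maps that plug distinct sample indices into some, but not all, of the slots. -/
noncomputable def deficientInj [Fintype ι] : Finset (SlotMap κ ι) :=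
  {j ∈ partialInj κ ι | freeSlots j ≠ ∅}

lemma sum_partialInj_eq_add [Fintype ι] (F : SlotMap κ ι → ℝ) :
    ∑ j ∈ partialInj κ ι, F j = ∑ j ∈ fullInj κ ι, F j + ∑ j ∈ deficientInj κ ι, F j :=
  (Finset.sum_filter_add_sum_filter_not _ _ _).symm

lemma freeSlots_of_mem_fullInj [Fintype ι] (hj : j ∈ fullInj κ ι) : freeSlots j = ∅ :=
  (Finset.mem_filter.1 hj).2

lemma isInj_of_mem_deficientInj [Fintype ι] (hj : j ∈ deficientInj κ ι) : IsInj j :=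
  mem_partialInj.1 (Finset.mem_filter.1 hj).1

lemma mem_fullInj_iff_exists [Fintype ι] :
    j ∈ fullInj κ ι ↔ ∃ φ : κ → ι, Function.Injective φ ∧ j = fun l => some (φ l) := by
  simp only [fullInj, Finset.mem_filter, mem_partialInj, Finset.eq_empty_iff_forall_notMem,
    mem_freeSlots]
  constructor
  · rintro ⟨hj, hfull⟩
    choose φ hφ using fun l => Option.ne_none_iff_exists'.1 (hfull l)
    exact ⟨φ, fun l l' h => hj (hφ l) (h ▸ hφ l'), funext hφ⟩
  · rintro ⟨φ, hφ, rfl⟩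
    refine ⟨fun l l' i hl hl' => hφ ?_, by simp⟩
    exact Option.some_injective _ (hl.trans hl'.symm)

lemma used_some_comp (φ : κ → ι) :
    used (fun l => some (φ l)) = Finset.univ.image φ := by
  ext i
  simp [mem_used]

lemma isInj_of_mem_fullInj [Fintype ι] (hj : j ∈ fullInj κ ι) : IsInj j :=
  mem_partialInj.1 (Finset.mem_filter.1 hj).1

lemma card_used_of_mem_fullInj [Fintype ι] (hj : j ∈ fullInj κ ι) :
    (used j).card = Fintype.card κ := by
  obtain ⟨φ, hφ, rfl⟩ := mem_fullInj_iff_exists.1 hj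
  rw [used_some_comp, Finset.card_image_of_injective _ hφ, Finset.card_univ]

lemma sum_fullInj_used_eq [Fintype ι] [DecidableEq κ] {M : Type*} [AddCommMonoid M] {φ : κ → ι}
    (hφ : Function.Injective φ) (F : SlotMap κ ι → M) :
    ∑ j ∈ fullInj κ ι with used j = Finset.univ.image φ, F j =
      ∑ σ : Equiv.Perm κ, F fun l => some (φ (σ l)) := by
  refine (Finset.sum_bij (fun σ _ l => some (φ (σ l))) ?_ ?_ ?_ fun σ _ => rfl).symm
  · intro σ _
    refine Finset.mem_filter.2
      ⟨mem_fullInj_iff_exists.2 ⟨φ ∘ σ, hφ.comp σ.injective, rfl⟩, ?_⟩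
    exact (used_some_comp (φ ∘ σ)).trans
      (by rw [← Finset.image_image, Finset.image_univ_equiv])
  · intro σ _ τ _ h
    ext l
    exact hφ (Option.some_injective _ (congrFun h l))
  · intro j hj
    obtain ⟨hfull, hused⟩ := Finset.mem_filter.1 hj
    obtain ⟨ψ, hψ, rfl⟩ := mem_fullInj_iff_exists.1 hfull
    have factor (l : κ) : ∃ l', φ l' = ψ l := by
      have : ψ l ∈ Finset.univ.image φ := hused ▸ mem_used.2 ⟨l, rfl⟩
      simpa using this
    choose σ hσ using factor
    have hσ_inj : Function.Injective σ := fun l l' h => hψ (by rw [← hσ, ← hσ, h])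
    refine ⟨Equiv.ofBijective σ (Finite.injective_iff_bijective.1 hσ_inj), Finset.mem_univ _, ?_⟩
    ext l : 1
    simp [hσ]

variable [MeasurableSpace E] {P : Measure E} [IsProbabilityMeasure P] {f : (κ → E) → ℝ}

lemma partialIntegral_some_comp (φ : κ → ι) (x : ι → E) :
    partialIntegral P f (fun l => some (φ l)) x = f (x ∘ φ) := by
  have fill_eq (y : κ → E) : fill (fun l => some (φ l)) x y = x ∘ φ := rfl
  simp only [partialIntegral, fill_eq, integral_const, probReal_univ, one_smul]

lemma sum_fullInj_partialIntegral [Fintype ι] {k : ℕ} {f : (Fin k → E) → ℝ} {φ : Fin k → ι}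
    (hφ : Function.Injective φ) (x : ι → E) :
    ∑ j ∈ fullInj (Fin k) ι with used j = Finset.univ.image φ, partialIntegral P f j x =
      k.factorial * symmetrize k f (x ∘ φ) := by
  have hk : (k.factorial : ℝ) ≠ 0 := mod_cast k.factorial_ne_zero
  rw [sum_fullInj_used_eq hφ, symmetrize, mul_inv_cancel_left₀ hk]
  exact Finset.sum_congr rfl fun σ _ => partialIntegral_some_comp (fun l => φ (σ l)) x

variable [Fintype ι]

section Orthogonality

variable {κ' : Type*} [Fintype κ'] {f' : (κ' → E) → ℝ}

lemma integral_sum_hoeffdingPart_mul_sum_eq_zero {A : Finset (SlotMap κ ι)}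
    {A' : Finset (SlotMap κ' ι)} (hA : ∀ j ∈ A, IsInj j) (hA' : ∀ j ∈ A', IsInj j)
    (hf : MemLp f 2 (piPow P κ)) (hf' : MemLp f' 2 (piPow P κ'))
    (hne : ∀ j ∈ A, ∀ j' ∈ A', used j ≠ used j') (c : SlotMap κ ι → ℝ) (c' : SlotMap κ' ι → ℝ) :
    ∫ x, (∑ j ∈ A, c j * hoeffdingPart P f j x) * (∑ j' ∈ A', c' j' * hoeffdingPart P f' j' x)
      ∂piPow P ι = 0 := by
  rw [integral_sum_mul_sum (fun j hj => ((hA j hj).memLp_hoeffdingPart hf).const_mul _)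
    (fun j hj => ((hA' j hj).memLp_hoeffdingPart hf').const_mul _)]
  refine Finset.sum_eq_zero fun j hj => Finset.sum_eq_zero fun j' hj' => ?_
  simp only [mul_mul_mul_comm (c j)]
  rw [integral_const_mul, (hA j hj).integral_hoeffdingPart_mul_hoeffdingPart_eq_zero (hA' j' hj')
    hf hf' (hne j hj j' hj'), mul_zero]

end Orthogonality

lemma integral_sq_sum_hoeffdingPart_eq_sum_fiber {A : Finset (SlotMap κ ι)} {t : Finset (Finset ι)}
    (hA : ∀ j ∈ A, IsInj j) (ht : ∀ j ∈ A, used j ∈ t) (hf : MemLp f 2 (piPow P κ))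
    (c : SlotMap κ ι → ℝ) :
    ∫ x, (∑ j ∈ A, c j * hoeffdingPart P f j x) ^ 2 ∂piPow P ι =
      ∑ R ∈ t, ∫ x, (∑ j ∈ A with used j = R, c j * hoeffdingPart P f j x) ^ 2 ∂piPow P ι := by
  have hfiber (R : Finset ι) : ∀ j ∈ A.filter (used · = R), IsInj j :=
    fun j hj => hA j (Finset.mem_filter.1 hj).1
  simp only [← Finset.sum_fiberwise_of_maps_to ht]
  refine integral_sq_sum_of_orthogonal (fun R _ => memLp_finsetSum _ fun j hj =>
    ((hfiber R j hj).memLp_hoeffdingPart hf).const_mul _) fun R _ R' _ hne => ?_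
  refine integral_sum_hoeffdingPart_mul_sum_eq_zero (hfiber R) (hfiber R') hf hf ?_ c c
  intro j hj j' hj'
  rwa [(Finset.mem_filter.1 hj).2, (Finset.mem_filter.1 hj').2]

lemma integral_sq_sum_mul_hoeffdingPart_le {A : Finset (SlotMap κ ι)} (hA : ∀ j ∈ A, IsInj j)
    (hf : MemLp f 2 (piPow P κ)) (c : SlotMap κ ι → ℝ) :
    ∫ x, (∑ j ∈ A, c j * hoeffdingPart P f j x) ^ 2 ∂piPow P ι ≤
      (Fintype.card κ + 1) ^ Fintype.card κ *
        ∑ j ∈ A, c j ^ 2 * ∫ x, hoeffdingPart P f j x ^ 2 ∂piPow P ι := by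
  rw [integral_sq_sum_hoeffdingPart_eq_sum_fiber hA (fun j _ => Finset.mem_univ (used j)) hf,
    ← Finset.sum_fiberwise A used, Finset.mul_sum]
  refine Finset.sum_le_sum fun R _ => ?_
  have hmemLp : ∀ j ∈ A.filter (used · = R),
      MemLp (fun x => c j * hoeffdingPart P f j x) 2 (piPow P ι) :=
    fun j hj => ((hA j (Finset.mem_filter.1 hj).1).memLp_hoeffdingPart hf).const_mul _
  have card_fiber : (A.filter (used · = R)).card ≤ (Fintype.card κ + 1) ^ Fintype.card κ :=
    (Finset.card_le_card (Finset.filter_subset_filter _ (Finset.subset_univ A))).trans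
      (card_filter_used_eq_le R)
  refine (integral_sq_sum_le_card_mul_sum hmemLp).trans ?_
  simp only [mul_pow, integral_const_mul]
  refine mul_le_mul_of_nonneg_right (mod_cast card_fiber) (Finset.sum_nonneg fun j _ => ?_)
  exact mul_nonneg (sq_nonneg _) (integral_nonneg fun x => sq_nonneg _)

lemma integral_sq_sum_deficientInj_le (hf : MemLp f 2 (piPow P κ)) {C D : ℝ}
    (hC : ∀ q ≤ Fintype.card κ, ∀ c ≤ Fintype.card κ,
      hoeffdingCoeff (Fintype.card ι) q c ^ 2 ≤ C * (Fintype.card ι : ℝ) ^ q)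
    (hD₀ : 0 ≤ D)
    (hD : ∀ j ∈ deficientInj κ ι, ∫ x, hoeffdingPart P f j x ^ 2 ∂piPow P ι ≤ D) :
    ∫ x, (∑ j ∈ deficientInj κ ι,
        hoeffdingCoeff (Fintype.card ι) (freeSlots j).card (used j).card *
          hoeffdingPart P f j x) ^ 2 ∂piPow P ι ≤
      (Fintype.card κ + 1) ^ Fintype.card κ * (C * D) *
        (2 * Fintype.card ι) ^ Fintype.card κ := by
  have hC₀ : 0 ≤ C := by
    simpa using (sq_nonneg _).trans (hC 0 (Nat.zero_le _) 0 (Nat.zero_le _))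
  refine (integral_sq_sum_mul_hoeffdingPart_le (fun _ => isInj_of_mem_deficientInj) hf _).trans ?_
  rw [mul_assoc]
  gcongr
  calc ∑ j ∈ deficientInj κ ι,
        hoeffdingCoeff (Fintype.card ι) (freeSlots j).card (used j).card ^ 2 *
          ∫ x, hoeffdingPart P f j x ^ 2 ∂piPow P ι
      ≤ ∑ j ∈ deficientInj κ ι, C * (Fintype.card ι : ℝ) ^ (freeSlots j).card * D := by
        gcongr with j hj
        · exact hC _ (Finset.card_le_univ _) _ (card_used_le j)
        · exact hD j hj
    _ ≤ ∑ j : SlotMap κ ι, C * (Fintype.card ι : ℝ) ^ (freeSlots j).card * D :=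
        Finset.sum_le_sum_of_subset_of_nonneg (Finset.subset_univ _) fun j _ _ => by positivity
    _ = C * D * (2 * Fintype.card ι) ^ Fintype.card κ := by
        rw [two_mul, ← sum_pow_card_freeSlots, Finset.mul_sum]
        exact Finset.sum_congr rfl fun j _ => by ring

section Full

variable {k : ℕ} {f : (Fin k → E) → ℝ}

lemma integral_sq_sum_fullInj_used_eq_le (hf : MemLp f 2 (piPow P (Fin k))) (R : Finset ι) :
    ∫ x, (∑ j ∈ fullInj (Fin k) ι with used j = R, hoeffdingPart P f j x) ^ 2 ∂piPow P ι ≤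
      (k.factorial : ℝ) ^ 2 * ∫ u, symmetrize k f u ^ 2 ∂piPow P (Fin k) := by
  rcases ((fullInj (Fin k) ι).filter (used · = R)).eq_empty_or_nonempty with hempty | ⟨j, hj⟩
  · simp only [hempty, Finset.sum_empty, zero_pow two_ne_zero, integral_zero]
    exact mul_nonneg (sq_nonneg _) (integral_nonneg fun u => sq_nonneg _)
  obtain ⟨hfull, rfl⟩ := Finset.mem_filter.1 hj
  obtain ⟨φ, hφ, rfl⟩ := mem_fullInj_iff_exists.1 hfull
  refine (integral_sq_sum_hoeffdingPart_le (fun j' hj' =>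
    ⟨isInj_of_mem_fullInj (Finset.mem_filter.1 hj').1, (Finset.mem_filter.1 hj').2⟩) hf).trans_eq ?_
  simp only [used_some_comp, sum_fullInj_partialIntegral hφ, mul_pow, integral_const_mul]
  congr 1
  exact integral_comp_of_measurePreserving (measurePreserving_piPow_comp P hφ)
    (memLp_symmetrize hf).integrable_sq.1

lemma integral_sq_sum_fullInj_le (hf : MemLp f 2 (piPow P (Fin k))) :
    ∫ x, (∑ j ∈ fullInj (Fin k) ι, hoeffdingPart P f j x) ^ 2 ∂piPow P ι ≤
      k.factorial * ((Fintype.card ι : ℝ) ^ k * ∫ u, symmetrize k f u ^ 2 ∂piPow P (Fin k)) := by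
  have hused : ∀ j ∈ fullInj (Fin k) ι, used j ∈ Finset.powersetCard k Finset.univ := fun j hj =>
    Finset.mem_powersetCard.2
      ⟨Finset.subset_univ _, (card_used_of_mem_fullInj hj).trans (Fintype.card_fin k)⟩
  have fiberwise := integral_sq_sum_hoeffdingPart_eq_sum_fiber (fun j => isInj_of_mem_fullInj) hused
    hf fun _ => 1
  simp only [one_mul] at fiberwise
  have choose_le : (k.factorial : ℝ) * (Fintype.card ι).choose k ≤ (Fintype.card ι : ℝ) ^ k := by
    exact_mod_cast (Nat.descFactorial_eq_factorial_mul_choose _ _).symm.trans_le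
      (Nat.descFactorial_le_pow (Fintype.card ι) k)
  have : 0 ≤ ∫ u, symmetrize k f u ^ 2 ∂piPow P (Fin k) :=
    integral_nonneg fun u => sq_nonneg _
  calc ∫ x, (∑ j ∈ fullInj (Fin k) ι, hoeffdingPart P f j x) ^ 2 ∂piPow P ι
      ≤ ∑ _R ∈ Finset.powersetCard k (Finset.univ : Finset ι),
          (k.factorial : ℝ) ^ 2 * ∫ u, symmetrize k f u ^ 2 ∂piPow P (Fin k) :=
        fiberwise.trans_le (Finset.sum_le_sum fun R _ => integral_sq_sum_fullInj_used_eq_le hf R)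
    _ = k.factorial * ((k.factorial * (Fintype.card ι).choose k) *
          ∫ u, symmetrize k f u ^ 2 ∂piPow P (Fin k)) := by
        rw [Finset.sum_const, Finset.card_powersetCard, Finset.card_univ, nsmul_eq_mul]
        ring
    _ ≤ _ := by gcongr

end Full

end SlotMap

section Diagonal

variable {E κ : Type*} [MeasurableSpace E]

lemma measurableSet_injective [Countable κ] (hdiag : MeasurableSet {p : E × E | p.1 = p.2}) :
    MeasurableSet {u : κ → E | Function.Injective u} := by
  have hpair (l l' : κ) : MeasurableSet {u : κ → E | u l = u l'} := by
    have measurable_pair : Measurable fun u : κ → E => (u l, u l') := by fun_prop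
    exact measurable_pair hdiag
  unfold Function.Injective
  measurability

lemma ae_prod_ne {P : Measure E} [SFinite P] [NullSingletonClass P]
    (hdiag : MeasurableSet {p : E × E | p.1 = p.2}) : ∀ᵐ p ∂P.prod P, p.1 ≠ p.2 := by
  simp only [ae_iff, ne_eq, not_not]
  rw [Measure.measure_prod_null hdiag]
  refine ae_of_all _ fun t => ?_
  change P (Prod.mk t ⁻¹' _) = 0
  have section_eq : Prod.mk t ⁻¹' {p : E × E | p.1 = p.2} = {t} := by
    ext s
    simp [eq_comm]
  rw [section_eq, measure_singleton]

lemma ae_piPow_injective [Fintype κ] {P : Measure E} [IsProbabilityMeasure P]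
    [NullSingletonClass P] (hdiag : MeasurableSet {p : E × E | p.1 = p.2}) :
    ∀ᵐ u ∂piPow P κ, Function.Injective u := by
  have indep : iIndepFun (fun (l : κ) (u : κ → E) => u l) (piPow P κ) :=
    iIndepFun_pi (X := fun _ => id) fun _ => aemeasurable_id
  have hpair (l l' : κ) (hne : l ≠ l') : ∀ᵐ u ∂piPow P κ, u l ≠ u l' := by
    have map_pair := (indepFun_iff_map_prod_eq_prod_map_map (measurable_pi_apply l).aemeasurable
      (measurable_pi_apply l').aemeasurable).1 (indep.indepFun hne)
    rw [(measurePreserving_eval (fun _ : κ => P) l).map_eq,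
      (measurePreserving_eval (fun _ : κ => P) l').map_eq] at map_pair
    exact ae_of_ae_map ((measurable_pi_apply l).prodMk (measurable_pi_apply l')).aemeasurable
      (map_pair ▸ ae_prod_ne hdiag)
  have hall : ∀ᵐ u ∂piPow P κ, ∀ l l', l ≠ l' → u l ≠ u l' :=
    ae_all_iff.2 fun l => ae_all_iff.2 fun l' => ae_all_iff.2 (hpair l l')
  filter_upwards [hall] with u hu l l' heq
  exact not_imp_not.1 (hu l l') heq

end Diagonal

namespace SlotMap

variable {E κ ι : Type*} [MeasurableSpace E] {P : Measure E} {j : SlotMap κ ι} {f : (κ → E) → ℝ}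

lemma measurable_fill (j : SlotMap κ ι) (x : ι → E) : Measurable (fill j x) := by
  refine measurable_pi_lambda _ fun l => ?_
  cases h : j l <;> simp only [fill, h, Option.elim] <;> fun_prop

variable [Fintype κ]

/-- The law of `fill j x` when the free slots are filled with independent samples of `P`. -/
noncomputable def fillLaw (P : Measure E) (j : SlotMap κ ι) (x : ι → E) : Measure (κ → E) :=
  (piPow P κ).map (fill j x)

lemma integral_fillLaw {x : ι → E} (hf : AEStronglyMeasurable f (fillLaw P j x)) :
    ∫ u, f u ∂fillLaw P j x = partialIntegral P f j x :=
  integral_map (measurable_fill j x).aemeasurable hf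

variable [IsProbabilityMeasure P]

lemma IsInj.ae_fillLaw [Fintype ι] (hj : IsInj j) {p : (κ → E) → Prop}
    (hp : ∀ᵐ u ∂piPow P κ, p u) : ∀ᵐ x ∂piPow P ι, ∀ᵐ u ∂fillLaw P j x, p u := by
  obtain ⟨N, subset_N, hN, hN_null⟩ := exists_measurable_superset_of_null (ae_iff.1 hp)
  have notMem_N : ∀ᵐ u ∂piPow P κ, u ∉ N := measure_eq_zero_iff_ae_notMem.1 hN_null
  filter_upwards [Measure.ae_ae_of_ae_prod
    ((hj.measurePreserving_fill P).quasiMeasurePreserving.ae notMem_N)] with x hx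
  filter_upwards [(ae_map_iff (measurable_fill j x).aemeasurable hN.compl).2 hx] with u hu
  exact not_not.1 fun h => hu (subset_N h)

lemma IsInj.ae_integrable_fillLaw [Fintype ι] (hj : IsInj j) (hf : MemLp f 2 (piPow P κ)) :
    ∀ᵐ x ∂piPow P ι, Integrable f (fillLaw P j x) := by
  filter_upwards [hj.ae_fillLaw hf.1.ae_eq_mk, ae_memLp_two_prodMk_left (hj.memLp_comp_fill hf)]
    with x hmeas hmemLp
  exact (integrable_map_measure ⟨hf.1.mk f, hf.1.stronglyMeasurable_mk, hmeas⟩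
    (measurable_fill j x).aemeasurable).2 (hmemLp.integrable one_le_two)

/-- A repeated sample index puts all the mass on the diagonal; without repetitions the diagonal
is null. -/
lemma ae_setIntegral_injective_fillLaw [Fintype ι] [NullSingletonClass P]
    (hdiag : MeasurableSet {p : E × E | p.1 = p.2}) (hf : MemLp f 2 (piPow P κ))
    (j : SlotMap κ ι) :
    ∀ᵐ x ∂piPow P ι, IntegrableOn f {u | Function.Injective u} (fillLaw P j x) ∧
      ∫ u in {u | Function.Injective u}, f u ∂fillLaw P j x =
        if IsInj j then partialIntegral P f j x else 0 := by
  split_ifs with hj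
  · filter_upwards [hj.ae_fillLaw (ae_piPow_injective hdiag), hj.ae_integrable_fillLaw hf]
      with x hinj hint
    have restrict_eq : (fillLaw P j x).restrict {u | Function.Injective u} = fillLaw P j x :=
      Measure.restrict_eq_self_of_ae_mem hinj
    rw [IntegrableOn, restrict_eq]
    exact ⟨hint, integral_fillLaw hint.1⟩
  · refine ae_of_all _ fun x => ?_
    have null : fillLaw P j x {u | Function.Injective u} = 0 := by
      have preimage_eq : fill j x ⁻¹' {u | Function.Injective u} = ∅ :=
        Set.eq_empty_of_forall_notMem fun y hy =>
          hj fun l l' i hl hl' => hy (by simp [fill, hl, hl'])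
      rw [fillLaw, Measure.map_apply (measurable_fill j x) (measurableSet_injective hdiag),
        preimage_eq, measure_empty]
    exact ⟨.of_measure_zero null, setIntegral_measure_zero f null⟩

/-- The total mass that a slot contributes to the product of the two parts of the signed measure
`∑ i, δ (x i) - n • P`. -/
def slotMass [Fintype ι] : Option ι → ℝ≥0
  | none => Fintype.card ι
  | some _ => 1

/-- The normalized law that a slot contributes to the product of the two parts of the signed measure
`∑ i, δ (x i) - n • P`. -/
noncomputable def slotLaw (P : Measure E) (x : ι → E) : Option ι → Measure E
  | none => P
  | some i => Measure.dirac (x i)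

instance isProbabilityMeasure_slotLaw (x : ι → E) (o : Option ι) :
    IsProbabilityMeasure (slotLaw P x o) := by
  cases o <;> unfold slotLaw <;> infer_instance

lemma fillLaw_eq_pi (j : SlotMap κ ι) (x : ι → E) :
    fillLaw P j x = Measure.pi fun l => slotLaw P x (j l) := by
  have measurable_slot (l : κ) : Measurable fun t : E => (j l).elim t x := by
    cases j l <;> simp only [Option.elim] <;> fun_prop
  have map_slot (l : κ) : P.map (fun t : E => (j l).elim t x) = slotLaw P x (j l) := by
    cases j l with
    | none => exact Measure.map_id
    | some i => simp [slotLaw]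
  have (l : κ) : SigmaFinite (P.map fun t : E => (j l).elim t x) := by
    rw [map_slot]
    infer_instance
  simp only [← map_slot]
  exact Measure.pi_map_pi fun l => (measurable_slot l).aemeasurable

lemma isFiniteMeasure_mixMeasure {n : ℕ} (x : Fin n → E) (b : Bool) :
    IsFiniteMeasure (mixMeasure P n x b) := by
  cases b <;> unfold mixMeasure <;> infer_instance

lemma pi_mixMeasure_eq_sum_fillLaw [DecidableEq κ] {n : ℕ} (x : Fin n → E) (ε : κ → Bool) :
    Measure.pi (fun l => mixMeasure P n x (ε l)) =
      ∑ j : SlotMap κ (Fin n) with (fun l => (j l).isSome) = ε,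
        (∏ l, slotMass (j l)) • fillLaw P j x := by
  have := isFiniteMeasure_mixMeasure (P := P) x
  have filter_eq : ({j | (fun l => (j l).isSome) = ε} : Finset (SlotMap κ (Fin n))) =
      Fintype.piFinset fun l => {o : Option (Fin n) | o.isSome = ε l} := by
    ext j
    simp [funext_iff]
  refine Measure.pi_eq fun s _ => ?_
  rw [Measure.finsetSum_apply, filter_eq]
  simp only [Measure.smul_apply, ENNReal.smul_def, smul_eq_mul, fillLaw_eq_pi, Measure.pi_pi,
    ENNReal.ofNNReal_finsetProd, ← Finset.prod_mul_distrib]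
  rw [← Finset.prod_univ_sum (fun l => {o : Option (Fin n) | o.isSome = ε l})
    fun l o => slotMass o * slotLaw P x o (s l)]
  refine Finset.prod_congr rfl fun l _ => ?_
  rw [Finset.sum_filter, Fintype.sum_option]
  cases ε l <;> simp [slotMass, slotLaw, mixMeasure]

lemma neg_one_pow_mul_prod_slotMass [Fintype ι] (j : SlotMap κ ι) :
    (-1 : ℝ) ^ (Finset.univ.filter fun l => (j l).isSome = false).card *
      (∏ l, slotMass (j l) : ℝ≥0) = ∏ l, slotWeight (j l) := by
  rw [NNReal.coe_prod, ← Finset.prod_const, Finset.prod_filter, ← Finset.prod_mul_distrib]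
  refine Finset.prod_congr rfl fun l _ => ?_
  cases j l <;> simp [slotMass, slotWeight]

end SlotMap

open SlotMap

section EmpInt

variable {E : Type*} [MeasurableSpace E] {P : Measure E} [IsProbabilityMeasure P]
  {n k : ℕ} {f : (Fin k → E) → ℝ} {h : (k : ℕ) → (Fin k → E) → ℝ}

variable (P n) in
/-- The leading term of the empirical integral of order `k`: the part of its Hoeffding
decomposition carried by the sets of exactly `k` sample indices. -/
noncomputable def empChaos (a : ℝ) (f : (Fin k → E) → ℝ) (x : Fin n → E) : ℝ :=
  (√a)⁻¹ ^ k * ∑ j ∈ fullInj (Fin k) (Fin n), hoeffdingPart P f j x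

variable (P n) in
/-- The part of the Hoeffding decomposition of the empirical integral of order `k` carried by the
sets of fewer than `k` sample indices. -/
noncomputable def empRemainder (a : ℝ) (f : (Fin k → E) → ℝ) (x : Fin n → E) : ℝ :=
  (√a)⁻¹ ^ k * ∑ j ∈ deficientInj (Fin k) (Fin n),
    hoeffdingCoeff n (freeSlots j).card (used j).card * hoeffdingPart P f j x

lemma memLp_empChaos (hf : MemLp f 2 (piPow P (Fin k))) (a : ℝ) :
    MemLp (empChaos P n a f) 2 (piPow P (Fin n)) :=
  (memLp_finsetSum _ fun _ hj =>
    (isInj_of_mem_fullInj hj).memLp_hoeffdingPart hf).const_mul _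

lemma memLp_empRemainder (hf : MemLp f 2 (piPow P (Fin k))) (a : ℝ) :
    MemLp (empRemainder P n a f) 2 (piPow P (Fin n)) :=
  (memLp_finsetSum _ fun _ hj =>
    ((isInj_of_mem_deficientInj hj).memLp_hoeffdingPart hf).const_mul _).const_mul _

lemma sq_inv_sqrt_pow {a : ℝ} (ha : 0 ≤ a) (k : ℕ) : ((√a)⁻¹ ^ k) ^ 2 = a⁻¹ ^ k := by
  rw [← pow_mul, mul_comm, pow_mul, inv_pow, Real.sq_sqrt ha]

lemma integral_sq_empChaos_le {a : ℝ} (ha : 0 ≤ a) (hf : MemLp f 2 (piPow P (Fin k))) :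
    ∫ x, empChaos P n a f x ^ 2 ∂piPow P (Fin n) ≤
      k.factorial * ((n / a) ^ k * ∫ u, symmetrize k f u ^ 2 ∂piPow P (Fin k)) := by
  have full_le := integral_sq_sum_fullInj_le (ι := Fin n) hf
  rw [Fintype.card_fin] at full_le
  simp only [empChaos, mul_pow, integral_const_mul, sq_inv_sqrt_pow ha]
  calc _ ≤ a⁻¹ ^ k * (k.factorial * ((n : ℝ) ^ k *
          ∫ u, symmetrize k f u ^ 2 ∂piPow P (Fin k))) := by gcongr
    _ = _ := by rw [div_eq_mul_inv, mul_pow]; ring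

lemma integral_empChaos_mul_empChaos_eq_zero {k' : ℕ} {f' : (Fin k' → E) → ℝ} (hne : k ≠ k')
    (hf : MemLp f 2 (piPow P (Fin k))) (hf' : MemLp f' 2 (piPow P (Fin k'))) (a : ℝ) :
    ∫ x, empChaos P n a f x * empChaos P n a f' x ∂piPow P (Fin n) = 0 := by
  have used_ne : ∀ j ∈ fullInj (Fin k) (Fin n), ∀ j' ∈ fullInj (Fin k') (Fin n),
      used j ≠ used j' := fun j hj j' hj' heq => hne (by
    simpa [heq, card_used_of_mem_fullInj hj'] using (card_used_of_mem_fullInj hj).symm)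
  simpa only [empChaos, Finset.mul_sum] using
    integral_sum_hoeffdingPart_mul_sum_eq_zero (fun _ => isInj_of_mem_fullInj)
      (fun _ => isInj_of_mem_fullInj) hf hf' used_ne (fun _ => (√a)⁻¹ ^ k) fun _ => (√a)⁻¹ ^ k'

lemma integral_sq_empRemainder_le {a C D : ℝ} (ha : 0 ≤ a) (hf : MemLp f 2 (piPow P (Fin k)))
    (hC : ∀ q ≤ k, ∀ c ≤ k, hoeffdingCoeff n q c ^ 2 ≤ C * (n : ℝ) ^ q) (hD₀ : 0 ≤ D)
    (hD : ∀ j ∈ deficientInj (Fin k) (Fin n),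
      ∫ x, hoeffdingPart P f j x ^ 2 ∂piPow P (Fin n) ≤ D) :
    ∫ x, empRemainder P n a f x ^ 2 ∂piPow P (Fin n) ≤
      (2 * (k + 1)) ^ k * C * ((n / a) ^ k * D) := by
  have deficient_le := integral_sq_sum_deficientInj_le (ι := Fin n) (C := C) hf
    (by simpa only [Fintype.card_fin] using hC) hD₀ hD
  simp only [Fintype.card_fin] at deficient_le
  simp only [empRemainder, mul_pow, integral_const_mul, sq_inv_sqrt_pow ha]
  calc _ ≤ a⁻¹ ^ k * ((k + 1) ^ k * (C * D) * (2 * n) ^ k) := by gcongr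
    _ = _ := by rw [div_eq_mul_inv, mul_pow, mul_pow]; ring

lemma integral_sq_sum_empChaos_le {a : ℝ} (ha : 0 ≤ a)
    (hh : ∀ k, MemLp (h k) 2 (piPow P (Fin k))) (s : Finset ℕ) :
    ∫ x, (∑ k ∈ s, empChaos P n a (h k) x) ^ 2 ∂piPow P (Fin n) ≤
      ∑ k ∈ s, k.factorial *
        ((n / a) ^ k * ∫ u, symmetrize k (h k) u ^ 2 ∂piPow P (Fin k)) := by
  rw [integral_sq_sum_of_orthogonal (fun k _ => memLp_empChaos (hh k) a)
    fun k _ k' _ hne => integral_empChaos_mul_empChaos_eq_zero hne (hh k) (hh k') a]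
  exact Finset.sum_le_sum fun k _ => integral_sq_empChaos_le ha (hh k)

variable [NullSingletonClass P]

lemma ae_empInt_eq_sum_partialIntegral (hdiag : MeasurableSet {p : E × E | p.1 = p.2})
    (hf : MemLp f 2 (piPow P (Fin k))) (a : ℝ) :
    ∀ᵐ x ∂piPow P (Fin n), empInt P n a x k f = (√a)⁻¹ ^ k *
      ∑ j ∈ partialInj (Fin k) (Fin n), (∏ l, slotWeight (j l)) * partialIntegral P f j x := by
  filter_upwards [ae_all_iff.2 (ae_setIntegral_injective_fillLaw (ι := Fin n) hdiag hf)] with x hx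
  have hI : MeasurableSet {u : Fin k → E | Function.Injective u} := measurableSet_injective hdiag
  have signed_integral (ε : Fin k → Bool) :
      (-1 : ℝ) ^ (Finset.univ.filter fun l => ε l = false).card *
        ∫ u in {u | Function.Injective u}, f u ∂(Measure.pi fun l => mixMeasure P n x (ε l)) =
      ∑ j : SlotMap (Fin k) (Fin n) with (fun l => (j l).isSome) = ε,
        if IsInj j then (∏ l, slotWeight (j l)) * partialIntegral P f j x else 0 := by
    rw [← integral_indicator hI, pi_mixMeasure_eq_sum_fillLaw, integral_finsetSum_measure
      fun j _ => ((integrable_indicator_iff hI).2 (hx j).1).smul_measure_nnreal, Finset.mul_sum]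
    refine Finset.sum_congr rfl fun j hj => ?_
    rw [integral_smul_nnreal_measure, integral_indicator hI, (hx j).2, NNReal.smul_def,
      smul_eq_mul, ← mul_assoc, ← (Finset.mem_filter.1 hj).2, neg_one_pow_mul_prod_slotMass,
      mul_ite, mul_zero]
  rw [empInt, Finset.sum_congr rfl fun ε _ => signed_integral ε, Finset.sum_fiberwise,
    ← Finset.sum_filter]
  congr! 2
  ext j
  simp [mem_partialInj]

lemma ae_empInt_eq_add (hdiag : MeasurableSet {p : E × E | p.1 = p.2})
    (hf : MemLp f 2 (piPow P (Fin k))) (a : ℝ) :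
    ∀ᵐ x ∂piPow P (Fin n), empInt P n a x k f = empChaos P n a f x + empRemainder P n a f x := by
  filter_upwards [ae_empInt_eq_sum_partialIntegral hdiag hf a] with x hx
  rw [hx, sum_partialInj_prod_slotWeight_mul fun j => partialIntegral P f j x,
    sum_partialInj_eq_add, mul_add, Fintype.card_fin]
  refine congrArg (_ * · + _) (Finset.sum_congr rfl fun j hj => ?_)
  rw [freeSlots_of_mem_fullInj hj, Finset.card_empty, hoeffdingCoeff_zero, one_mul]
  rfl

lemma memLp_empInt (hdiag : MeasurableSet {p : E × E | p.1 = p.2})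
    (hf : MemLp f 2 (piPow P (Fin k))) (a : ℝ) :
    MemLp (fun x => empInt P n a x k f) 2 (piPow P (Fin n)) :=
  ((memLp_empChaos hf a).add (memLp_empRemainder hf a)).ae_eq
    (EventuallyEq.symm (ae_empInt_eq_add hdiag hf a))

lemma integral_sq_sum_empInt_le (hdiag : MeasurableSet {p : E × E | p.1 = p.2}) {a : ℝ}
    (ha : 0 ≤ a) (hh : ∀ k, MemLp (h k) 2 (piPow P (Fin k))) (s : Finset ℕ) :
    ∫ x, (∑ k ∈ s, empInt P n a x k (h k)) ^ 2 ∂piPow P (Fin n) ≤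
      2 * ∑ k ∈ s, k.factorial *
        ((n / a) ^ k * ∫ u, symmetrize k (h k) u ^ 2 ∂piPow P (Fin k)) +
      2 * (s.card * ∑ k ∈ s, ∫ x, empRemainder P n a (h k) x ^ 2 ∂piPow P (Fin n)) := by
  have decomposition : (fun x => (∑ k ∈ s, empInt P n a x k (h k)) ^ 2) =ᵐ[piPow P (Fin n)]
      fun x => (∑ k ∈ s, empChaos P n a (h k) x + ∑ k ∈ s, empRemainder P n a (h k) x) ^ 2 := by
    filter_upwards [ae_all_iff.2 fun k => ae_empInt_eq_add (n := n) hdiag (hh k) a] with x hx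
    simp only [hx, Finset.sum_add_distrib]
  rw [integral_congr_ae decomposition]
  refine (integral_sq_add_le (memLp_finsetSum s fun k _ => memLp_empChaos (hh k) a)
    (memLp_finsetSum s fun k _ => memLp_empRemainder (hh k) a)).trans ?_
  gcongr
  · exact integral_sq_sum_empChaos_le ha hh s
  · exact integral_sq_sum_le_card_mul_sum fun k _ => memLp_empRemainder (hh k) a

end EmpInt

section Domination

variable {α κ : Type*} [MeasurableSpace α] [Fintype κ] {μ ν : Measure α} {r : ℝ}

lemma nullSingletonClass_of_smul_le [NullSingletonClass μ] {c : ℝ≥0∞} (hc : c ≠ 0)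
    (hle : c • ν ≤ μ) : NullSingletonClass ν where
  measure_singleton x := by
    have smul_singleton_le : c * ν {x} ≤ μ {x} := hle {x}
    rw [measure_singleton (μ := μ), nonpos_iff_eq_zero, mul_eq_zero] at smul_singleton_le
    exact smul_singleton_le.resolve_left hc

lemma pow_card_smul_piPow_le [SigmaFinite ν] {c : ℝ≥0∞} (hle : c • ν ≤ μ) :
    c ^ Fintype.card κ • piPow ν κ ≤ piPow μ κ := by
  have le_pi : (c ^ Fintype.card κ • piPow ν κ).toOuterMeasure ≤
      OuterMeasure.pi fun _ : κ => μ.toOuterMeasure := by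
    refine OuterMeasure.le_pi.2 fun t _ => ?_
    change (c ^ Fintype.card κ • piPow ν κ) (Set.univ.pi t) ≤ ∏ l, μ (t l)
    rw [Measure.smul_apply, Measure.pi_pi, smul_eq_mul, ← Finset.card_univ, ← Finset.prod_const,
      ← Finset.prod_mul_distrib]
    exact Finset.prod_le_prod' fun l _ => hle (t l)
  refine Measure.le_iff'.2 fun s => (le_pi s).trans ?_
  rw [piPow, Measure.pi]
  exact le_toMeasure_apply _ _ s

lemma memLp_of_smul_le {f : α → ℝ} {p c : ℝ≥0∞} (hc : c ≠ 0) (hc_top : c ≠ ∞)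
    (hle : c • ν ≤ μ) (hf : MemLp f p μ) : MemLp f p ν := by
  refine hf.of_measure_le_smul (c := c⁻¹) (ENNReal.inv_ne_top.2 hc) (Measure.le_iff.2 fun s _ => ?_)
  rw [Measure.smul_apply, smul_eq_mul, ← ENNReal.mul_le_iff_le_inv hc hc_top]
  exact hle s

lemma toReal_mul_setIntegral_sq_le {f : α → ℝ} {c : ℝ≥0∞} (hle : c • ν ≤ μ) (hf : MemLp f 2 μ)
    (S : Set α) : c.toReal * ∫ x in S, f x ^ 2 ∂ν ≤ ∫ x in S, f x ^ 2 ∂μ := by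
  rw [← smul_eq_mul, ← integral_smul_measure, ← Measure.restrict_smul]
  exact integral_mono_measure (Measure.restrict_mono_measure hle S)
    (ae_of_all _ fun x => sq_nonneg _) hf.integrable_sq.integrableOn

lemma measureReal_le_of_smul_le {B : Set α} (hr : 0 < r) (hle : ENNReal.ofReal r • ν ≤ μ)
    (hB : μ B ≠ ∞) : ν.real B ≤ r⁻¹ * μ.real B := by
  have smul_le := ENNReal.toReal_mono hB (hle B)
  rw [Measure.smul_apply, smul_eq_mul, ENNReal.toReal_mul, ENNReal.toReal_ofReal hr.le] at smul_le
  rwa [← div_eq_inv_mul, le_div_iff₀' hr]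

lemma memLp_piPow_of_smul_le [SigmaFinite ν] {f : (κ → α) → ℝ} {p : ℝ≥0∞}
    (hr : 0 < r) (hle : ENNReal.ofReal r • ν ≤ μ) (hf : MemLp f p (piPow μ κ)) :
    MemLp f p (piPow ν κ) :=
  memLp_of_smul_le (pow_ne_zero _ (ENNReal.ofReal_pos.2 hr).ne')
    (ENNReal.pow_ne_top ENNReal.ofReal_ne_top) (pow_card_smul_piPow_le hle) hf

lemma pow_card_mul_setIntegral_sq_piPow_le [SigmaFinite ν] {f : (κ → α) → ℝ}
    (hr : 0 ≤ r) (hle : ENNReal.ofReal r • ν ≤ μ) (hf : MemLp f 2 (piPow μ κ))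
    (S : Set (κ → α)) :
    r ^ Fintype.card κ * ∫ u in S, f u ^ 2 ∂piPow ν κ ≤ ∫ u in S, f u ^ 2 ∂piPow μ κ := by
  simpa only [ENNReal.toReal_pow, ENNReal.toReal_ofReal hr] using
    toReal_mul_setIntegral_sq_le (pow_card_smul_piPow_le (κ := κ) hle) hf S

lemma toReal_eLpNorm_two_sq {f : α → ℝ} (hf : MemLp f 2 μ) :
    (eLpNorm f 2 μ).toReal ^ 2 = ∫ x, f x ^ 2 ∂μ := by
  have integral_nonneg : 0 ≤ ∫ x, f x ^ 2 ∂μ := integral_nonneg fun _ => sq_nonneg _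
  rw [hf.eLpNorm_eq_integral_rpow_norm two_ne_zero ENNReal.ofNat_ne_top]
  simp only [ENNReal.toReal_ofNat, Real.rpow_two, Real.norm_eq_abs, sq_abs]
  rw [ENNReal.toReal_ofReal (by positivity), ← Real.rpow_natCast, ← Real.rpow_mul integral_nonneg]
  norm_num

end Domination

section Limits

lemma tendsto_zero_of_forall_eventually_le_add {ι η : Type*} {l : Filter ι} {l' : Filter η}
    [l'.NeBot] {u : ι → ℝ} {v : η → ι → ℝ} {w : η → ℝ} (hu : ∀ n, 0 ≤ u n)
    (hv : ∀ N, Tendsto (v N) l (𝓝 0)) (hw : Tendsto w l' (𝓝 0))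
    (hle : ∀ N, ∀ᶠ n in l, u n ≤ v N n + w N) : Tendsto u l (𝓝 0) := by
  refine tendsto_order.2 ⟨fun b hb => .of_forall fun n => hb.trans_le (hu n), fun ε hε => ?_⟩
  obtain ⟨N, hN⟩ := (hw.eventually_lt_const (half_pos hε)).exists
  filter_upwards [hle N, (hv N).eventually_lt_const (half_pos hε)] with n hn hvn
  linarith

lemma exists_monotone_tendsto_diagonal {g : ℕ → ℕ → ℝ} (hg : ∀ N, Tendsto (g N) atTop (𝓝 0)) :
    ∃ K : ℕ → ℕ, Monotone K ∧ (∀ n, 1 ≤ K n) ∧ Tendsto K atTop atTop ∧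
      Tendsto (fun n => g (K n) n) atTop (𝓝 0) := by
  have eventually_small (N : ℕ) :
      ∀ᶠ n₀ in atTop, ∀ n ≥ n₀, ‖g (N + 1) n‖ ≤ 1 / ((N : ℝ) + 1) :=
    eventually_forall_ge_atTop.2
      ((hg (N + 1)).norm.eventually_le_const (by rw [norm_zero]; positivity))
  obtain ⟨φ, hφ, small⟩ := extraction_forall_of_eventually eventually_small
  let G (n : ℕ) : ℕ := Nat.findGreatest (fun N => φ N ≤ n) n
  have monotone_G : Monotone G := fun n m hnm =>
    Nat.findGreatest_mono (fun N hN => hN.trans hnm) hnm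
  have tendsto_G : Tendsto G atTop atTop := tendsto_atTop_atTop.2 fun N =>
    ⟨φ N, fun n hn => Nat.le_findGreatest ((hφ.id_le N).trans hn) hn⟩
  refine ⟨fun n => G n + 1, fun n m hnm => Nat.succ_le_succ (monotone_G hnm),
    fun n => Nat.le_add_left 1 _, tendsto_atTop_mono (fun n => Nat.le_succ (G n)) tendsto_G, ?_⟩
  refine squeeze_zero_norm' ?_ (tendsto_one_div_add_atTop_nhds_zero_nat.comp tendsto_G)
  filter_upwards [eventually_ge_atTop (φ 0)] with n hn
  exact small (G n) n (Nat.findGreatest_spec (P := fun N => φ N ≤ n) (Nat.zero_le n) hn)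

lemma tendsto_limsup_zero_of_eventually_le_add {V : ℕ → ℕ → ℝ} {T e : ℕ → ℝ}
    (hV : ∀ m n, 0 ≤ V m n) (hT : Tendsto T atTop (𝓝 0)) (he : Tendsto e atTop (𝓝 0))
    (hle : ∀ m, ∀ᶠ n in atTop, V m n ≤ T m + e n) :
    Tendsto (fun m => limsup (V m) atTop) atTop (𝓝 0) := by
  have hlim (m : ℕ) : Tendsto (fun n => T m + e n) atTop (𝓝 (T m)) := by
    simpa using he.const_add (T m)
  refine squeeze_zero (fun m => ?_) (fun m => ?_) hT
  · exact le_limsup_of_frequently_le (Eventually.of_forall (hV m)).frequently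
      ((hlim m).isBoundedUnder_le.mono_le (hle m))
  · rw [← (hlim m).limsup_eq]
    exact limsup_le_limsup (hle m)
      (IsBoundedUnder.isCoboundedUnder_le (isBoundedUnder_of ⟨0, hV m⟩))
      (hlim m).isBoundedUnder_le

lemma sum_Ioc_le_tsum_nat_add {t : ℕ → ℝ} (ht₀ : ∀ k, 0 ≤ t k) (ht : Summable t) (m M : ℕ) :
    ∑ k ∈ Finset.Ioc m M, t k ≤ ∑' k, t (k + m) := by
  have hdisj : Disjoint (Finset.range m) (Finset.Ioc m M) :=
    Finset.disjoint_left.2 fun k hk hk' =>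
      (Finset.mem_range.1 hk).not_gt (Finset.mem_Ioc.1 hk').1
  have le_tsum := ht.sum_le_tsum (Finset.range m ∪ Finset.Ioc m M) fun k _ => ht₀ k
  rw [Finset.sum_union hdisj, ← ht.sum_add_tsum_nat_add m] at le_tsum
  exact le_of_add_le_add_left le_tsum

end Limits

section Asymptotics

variable {E : Type*} [MeasurableSpace E] {μ : Measure E}

lemma tendsto_setIntegral_notMem_spanningSets [SigmaFinite μ] {κ : Type*} [Fintype κ]
    {g : (κ → E) → ℝ} (hg : Integrable g (piPow μ κ)) (l : κ) :
    Tendsto (fun N => ∫ u in {u | u l ∉ spanningSets μ N}, g u ∂piPow μ κ) atTop (𝓝 0) := by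
  have hmeas (N : ℕ) : MeasurableSet {u : κ → E | u l ∉ spanningSets μ N} :=
    (measurable_pi_apply (X := fun _ : κ => E) l) (measurableSet_spanningSets μ N).compl
  have hanti : Antitone fun N => {u : κ → E | u l ∉ spanningSets μ N} :=
    fun N M hNM u hu hu' => hu (monotone_spanningSets μ hNM hu')
  have iInter_eq : ⋂ N, {u : κ → E | u l ∉ spanningSets μ N} = ∅ := by
    refine Set.eq_empty_of_forall_notMem fun u hu => ?_
    exact Set.mem_iInter.1 hu (spanningSetsIndex μ (u l)) (mem_spanningSetsIndex μ (u l))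
  simpa only [iInter_eq, setIntegral_empty] using
    tendsto_setIntegral_of_antitone hmeas hanti ⟨0, hg.integrableOn⟩

variable {k n : ℕ} {a : ℝ} {P : Measure E} [IsProbabilityMeasure P] {f : (Fin k → E) → ℝ}

lemma integral_sq_hoeffdingPart_le_of_mem_deficientInj {ι : Type*} [Fintype ι] {κ : Type*}
    [Fintype κ] {f : (κ → E) → ℝ} (hf : MemLp f 2 (piPow P κ)) {j : SlotMap κ ι}
    (hj : j ∈ deficientInj κ ι) {B : Set E} (hB : MeasurableSet B) :
    ∫ x, hoeffdingPart P f j x ^ 2 ∂piPow P ι ≤ 2 * P.real B * ∫ u, f u ^ 2 ∂piPow P κ +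
      2 * ∑ l, ∫ u in {u | u l ∉ B}, f u ^ 2 ∂piPow P κ := by
  obtain ⟨l, hl⟩ := Finset.nonempty_iff_ne_empty.2 (Finset.mem_filter.1 hj).2
  have hinj := isInj_of_mem_deficientInj hj
  refine (hinj.integral_sq_hoeffdingPart_le hf).trans
    ((hinj.integral_sq_partialIntegral_le hf (mem_freeSlots.1 hl) hB).trans ?_)
  gcongr
  exact Finset.single_le_sum (f := fun l => ∫ u in {u | u l ∉ B}, f u ^ 2 ∂piPow P κ)
    (fun l _ => integral_nonneg fun u => sq_nonneg _) (Finset.mem_univ l)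

lemma integral_sq_empRemainder_le_of_smul_le (hn : 0 < n) (ha : 0 < a)
    (hle : ENNReal.ofReal (n / a) • P ≤ μ) (hf : MemLp f 2 (piPow μ (Fin k))) {C : ℝ}
    (hC : ∀ q ≤ k, ∀ c ≤ k, hoeffdingCoeff n q c ^ 2 ≤ C * (n : ℝ) ^ q)
    {B : Set E} (hB : MeasurableSet B) (hB_fin : μ B ≠ ∞) :
    ∫ x, empRemainder P n a f x ^ 2 ∂piPow P (Fin n) ≤
      (2 * (k + 1)) ^ k * C * (2 * (a / n * μ.real B) * ∫ u, f u ^ 2 ∂piPow μ (Fin k) +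
        2 * ∑ l, ∫ u in {u | u l ∉ B}, f u ^ 2 ∂piPow μ (Fin k)) := by
  have hr : 0 < n / a := div_pos (mod_cast hn) ha
  have hfP := memLp_piPow_of_smul_le hr hle hf
  have hC₀ : 0 ≤ C := by simpa using (sq_nonneg _).trans (hC 0 (Nat.zero_le _) 0 (Nat.zero_le _))
  have integral_nonneg' (S : Set (Fin k → E)) : 0 ≤ ∫ u in S, f u ^ 2 ∂piPow P (Fin k) :=
    integral_nonneg fun u => sq_nonneg _
  have measureReal_le : P.real B ≤ a / n * μ.real B := by
    simpa only [inv_div] using measureReal_le_of_smul_le hr hle hB_fin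
  have scaled_le (S : Set (Fin k → E)) : (n / a) ^ k * ∫ u in S, f u ^ 2 ∂piPow P (Fin k) ≤
      ∫ u in S, f u ^ 2 ∂piPow μ (Fin k) := by
    simpa only [Fintype.card_fin] using pow_card_mul_setIntegral_sq_piPow_le hr.le hle hf S
  have scaled_univ_le := scaled_le Set.univ
  have univ_nonneg := integral_nonneg' Set.univ
  simp only [Measure.restrict_univ] at scaled_univ_le univ_nonneg
  refine (integral_sq_empRemainder_le ha.le hfP hC
    (add_nonneg (by positivity) (mul_nonneg zero_le_two (Finset.sum_nonneg fun l _ =>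
      integral_nonneg' _))) fun j hj =>
        integral_sq_hoeffdingPart_le_of_mem_deficientInj hfP hj hB).trans ?_
  gcongr
  rw [mul_add, mul_left_comm, mul_left_comm _ 2, Finset.mul_sum]
  gcongr with l
  exact scaled_le _

variable [SigmaFinite μ]

lemma integral_sq_sum_empInt_le_of_smul_le [NullSingletonClass μ]
    (hdiag : MeasurableSet {p : E × E | p.1 = p.2}) (hn : 0 < n) (ha : 0 < a)
    (hle : ENNReal.ofReal (n / a) • P ≤ μ) {h : (k : ℕ) → (Fin k → E) → ℝ}
    (hh : ∀ k, MemLp (h k) 2 (piPow μ (Fin k))) (s : Finset ℕ) :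
    ∫ x, (∑ k ∈ s, empInt P n a x k (h k)) ^ 2 ∂piPow P (Fin n) ≤
      2 * ∑ k ∈ s, k.factorial *
        (eLpNorm (symmetrize k (h k)) 2 (piPow μ (Fin k))).toReal ^ 2 +
      2 * (s.card * ∑ k ∈ s, ∫ x, empRemainder P n a (h k) x ^ 2 ∂piPow P (Fin n)) := by
  have hr : 0 < n / a := div_pos (mod_cast hn) ha
  have := nullSingletonClass_of_smul_le (ENNReal.ofReal_pos.2 hr).ne' hle
  refine (integral_sq_sum_empInt_le hdiag ha.le
    (fun k => memLp_piPow_of_smul_le hr hle (hh k)) s).trans ?_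
  gcongr with k
  rw [toReal_eLpNorm_two_sq (memLp_symmetrize (hh k))]
  simpa only [Fintype.card_fin, Measure.restrict_univ] using
    pow_card_mul_setIntegral_sq_piPow_le hr.le hle (memLp_symmetrize (hh k)) Set.univ

section Sequence

variable {a : ℕ → ℝ} {P : ℕ → Measure E} [∀ n, IsProbabilityMeasure (P n)]

lemma tendsto_integral_sq_empRemainder (ha : ∀ n, 1 ≤ n → 0 < a n)
    (ha_lim : Tendsto (fun n : ℕ => a n / n) atTop (𝓝 0))
    (hle : ∀ n : ℕ, 1 ≤ n → ENNReal.ofReal (n / a n) • P n ≤ μ)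
    (hf : MemLp f 2 (piPow μ (Fin k))) :
    Tendsto (fun n => ∫ x, empRemainder (P n) n (a n) f x ^ 2 ∂piPow (P n) (Fin n))
      atTop (𝓝 0) := by
  obtain ⟨C, hC⟩ := exists_forall_hoeffdingCoeff_sq_le k
  let M : ℝ := (2 * (k + 1)) ^ k * C
  refine tendsto_zero_of_forall_eventually_le_add (l' := atTop)
    (v := fun N n => M * (2 * (a n / n * μ.real (spanningSets μ N)) *
      ∫ u, f u ^ 2 ∂piPow μ (Fin k)))
    (w := fun N => M * (2 * ∑ l, ∫ u in {u | u l ∉ spanningSets μ N}, f u ^ 2 ∂piPow μ (Fin k)))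
    (fun n => integral_nonneg fun x => sq_nonneg _) (fun N => ?_) ?_ fun N => ?_
  · simpa using (((ha_lim.mul_const _).const_mul 2).mul_const _).const_mul M
  · simpa using ((tendsto_finsetSum Finset.univ fun l _ =>
      tendsto_setIntegral_notMem_spanningSets hf.integrable_sq l).const_mul 2).const_mul M
  · filter_upwards [eventually_ge_atTop 1] with n hn
    rw [← mul_add]
    exact integral_sq_empRemainder_le_of_smul_le hn (ha n hn) (hle n hn) hf (hC n hn)
      (measurableSet_spanningSets μ N) (measure_spanningSets_lt_top μ N).ne

lemma exists_monotone_tendsto_limsup_integral_sq_sum_empInt [NullSingletonClass μ]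
    (ha : ∀ n, 1 ≤ n → 0 < a n) (ha_lim : Tendsto (fun n : ℕ => a n / n) atTop (𝓝 0))
    (hle : ∀ n : ℕ, 1 ≤ n → ENNReal.ofReal (n / a n) • P n ≤ μ)
    (hdiag : MeasurableSet {p : E × E | p.1 = p.2}) {h : (k : ℕ) → (Fin k → E) → ℝ}
    (hh : ∀ k, MemLp (h k) 2 (piPow μ (Fin k)))
    (hH : Summable fun k : ℕ => (k.factorial : ℝ) *
      (eLpNorm (symmetrize k (h k)) 2 (piPow μ (Fin k))).toReal ^ 2) :
    ∃ K : ℕ → ℕ, Monotone K ∧ (∀ n, 1 ≤ K n) ∧ Tendsto K atTop atTop ∧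
      Tendsto (fun m => limsup (fun n => ∫ x, (∑ k ∈ Finset.Ioc m (K n),
        empInt (P n) n (a n) x k (h k)) ^ 2 ∂piPow (P n) (Fin n)) atTop) atTop (𝓝 0) := by
  let t (k : ℕ) : ℝ := k.factorial * (eLpNorm (symmetrize k (h k)) 2 (piPow μ (Fin k))).toReal ^ 2
  let R (N n : ℕ) : ℝ := N * ∑ k ∈ Finset.Iic N,
    ∫ x, empRemainder (P n) n (a n) (h k) x ^ 2 ∂piPow (P n) (Fin n)
  have tendsto_R (N : ℕ) : Tendsto (R N) atTop (𝓝 0) := by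
    simpa using (tendsto_finsetSum (Finset.Iic N) fun k _ =>
      tendsto_integral_sq_empRemainder ha ha_lim hle (hh k)).const_mul (N : ℝ)
  obtain ⟨K, monotone_K, one_le_K, tendsto_K, tendsto_diag⟩ :=
    exists_monotone_tendsto_diagonal tendsto_R
  refine ⟨K, monotone_K, one_le_K, tendsto_K, tendsto_limsup_zero_of_eventually_le_add
    (T := fun m => 2 * ∑' k, t (k + m)) (e := fun n => 2 * R (K n) n)
    (fun m n => integral_nonneg fun x => sq_nonneg _)
    (by simpa using (tendsto_sum_nat_add t).const_mul 2)
    (by simpa using tendsto_diag.const_mul 2) fun m => ?_⟩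
  filter_upwards [eventually_ge_atTop 1] with n hn
  refine (integral_sq_sum_empInt_le_of_smul_le hdiag hn (ha n hn) (hle n hn) hh _).trans ?_
  gcongr
  · exact sum_Ioc_le_tsum_nat_add (fun k => by positivity) hH m (K n)
  · simp only [R]
    gcongr
    · simp
    · exact fun k hk => Finset.mem_Iic.2 (Finset.mem_Ioc.1 hk).2

end Sequence

end Asymptotics

lemma integral_comp_sample {E Ω ι : Type*} [MeasurableSpace E] [MeasurableSpace Ω] [Fintype ι]
    {Pr : Measure Ω} [IsProbabilityMeasure Pr] {P : Measure E} {X : ι → Ω → E}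
    (hX : ∀ i, AEMeasurable (X i) Pr) (hlaw : ∀ i, Pr.map (X i) = P) (hindep : iIndepFun X Pr)
    {F : (ι → E) → ℝ} (hF : AEStronglyMeasurable F (piPow P ι)) :
    ∫ ω, F (fun i => X i ω) ∂Pr = ∫ x, F x ∂piPow P ι := by
  have law_sample : Pr.map (fun ω i => X i ω) = piPow P ι := by
    simp only [(iIndepFun_iff_map_fun_eq_pi_map hX).1 hindep, hlaw]
  rw [← law_sample, integral_map (aemeasurable_pi_lambda _ hX) (law_sample ▸ hF)]

lemma smul_le_of_assumption21 {E : Type*} [MeasurableSpace E] {μ : Measure E} {a : ℕ → ℝ}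
    {P : ℕ → Measure E} (h21 : Assumption21 μ a P) {n : ℕ} (hn : 1 ≤ n) :
    ENNReal.ofReal (n / a n) • P n ≤ μ := by
  obtain ⟨-, -, -, -, le_succ, tendsto_apply⟩ := h21
  refine Measure.le_iff.2 fun B hB => ge_of_tendsto (tendsto_apply B hB) ?_
  filter_upwards [eventually_ge_atTop n] with m hm
  induction m, hm using Nat.le_induction with
  | base => rfl
  | succ m hm ih => exact_mod_cast ih.trans (le_succ B hB m (hn.trans hm))

theorem tail_second_moment_vanishes_general
    {E Ω : Type*} [MeasurableSpace E] [MeasurableSpace Ω]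
    (μ : Measure E) [SigmaFinite μ] [NullSingletonClass μ]
    (a : ℕ → ℝ) (P : ℕ → Measure E) [∀ n, IsProbabilityMeasure (P n)]
    (ha : ∀ n, 1 ≤ n → 0 < a n) (ha_lim : Tendsto (fun n : ℕ => a n / n) atTop (𝓝 0))
    (hle : ∀ n : ℕ, 1 ≤ n → ENNReal.ofReal (n / a n) • P n ≤ μ)
    (Pr : Measure Ω) [IsProbabilityMeasure Pr]
    (X : (n : ℕ) → Fin n → Ω → E)
    (hXmeas : ∀ n j, AEMeasurable (X n j) Pr)
    (hXlaw : ∀ n : ℕ, 1 ≤ n → ∀ j, Measure.map (X n j) Pr = P n)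
    (hXindep : ∀ n : ℕ, iIndepFun (X n) Pr)
    (hdiag : MeasurableSet {p : E × E | p.1 = p.2})
    (h : (k : ℕ) → (Fin k → E) → ℝ)
    (hmem : ∀ k : ℕ, MemLp (h k) 2 (Measure.pi fun _ : Fin k => μ))
    (hH : Summable (fun k : ℕ => (k.factorial : ℝ) *
      ((eLpNorm (symmetrize k (h k)) 2 (Measure.pi fun _ : Fin k => μ)).toReal) ^ 2)) :
    ∃ K : ℕ → ℕ, Monotone K ∧ (∀ n, 1 ≤ K n) ∧ Tendsto K atTop atTop ∧
      Tendsto (fun m : ℕ =>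
          Filter.limsup (fun n : ℕ =>
            ∫ ω, (∑ k ∈ Finset.Ioc m (K n),
              empInt (P n) n (a n) (fun j => X n j ω) k (h k)) ^ 2 ∂Pr) atTop)
        atTop (𝓝 0) := by
  obtain ⟨K, monotone_K, one_le_K, tendsto_K, tendsto_limsup⟩ :=
    exists_monotone_tendsto_limsup_integral_sq_sum_empInt ha ha_lim hle hdiag hmem hH
  refine ⟨K, monotone_K, one_le_K, tendsto_K, tendsto_limsup.congr fun m => limsup_congr ?_⟩
  filter_upwards [eventually_ge_atTop 1] with n hn
  have hr : 0 < n / a n := div_pos (mod_cast hn) (ha n hn)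
  have := nullSingletonClass_of_smul_le (ENNReal.ofReal_pos.2 hr).ne' (hle n hn)
  have memLp_sum := memLp_finsetSum (Finset.Ioc m (K n)) fun k _ =>
    memLp_empInt (n := n) hdiag (memLp_piPow_of_smul_le hr (hle n hn) (hmem k)) (a n)
  exact (integral_comp_sample (hXmeas n) (hXlaw n hn) (hXindep n) memLp_sum.integrable_sq.1).symm

/-- Under Assumption 2.1, for `h = (h^{(k)})_k ∈ H` there is a
nondecreasing sequence of positive integers `K_n → ∞` such that
`lim_{m→∞} limsup_{n→∞} 𝔼[(Σ_{k=m+1}^{K_n} I_k^{(n)}(h^{(k)}))²] = 0`. -/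
theorem tail_second_moment_vanishes
    {E Ω : Type*} [MeasurableSpace E] [MeasurableSpace Ω]
    (μ : Measure E) [SigmaFinite μ] [NullSingletonClass μ]
    (a : ℕ → ℝ) (P : ℕ → Measure E) [∀ n, IsProbabilityMeasure (P n)]
    (h21 : Assumption21 μ a P)
    (Pr : Measure Ω) [IsProbabilityMeasure Pr]
    (X : (n : ℕ) → Fin n → Ω → E)
    (hXmeas : ∀ n j, Measurable (X n j))
    (hXlaw : ∀ n : ℕ, 1 ≤ n → ∀ j, Measure.map (X n j) Pr = P n)
    (hXindep : ∀ n : ℕ, iIndepFun (X n) Pr)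
    (hdiag : MeasurableSet {p : E × E | p.1 = p.2})
    (h : (k : ℕ) → (Fin k → E) → ℝ)
    (hmem : ∀ k : ℕ, MemLp (h k) 2 (Measure.pi fun _ : Fin k => μ))
    (hH : Summable (fun k : ℕ => (k.factorial : ℝ) *
      ((eLpNorm (symmetrize k (h k)) 2 (Measure.pi fun _ : Fin k => μ)).toReal) ^ 2)) :
    ∃ K : ℕ → ℕ, Monotone K ∧ (∀ n, 1 ≤ K n) ∧ Tendsto K atTop atTop ∧
      Tendsto (fun m : ℕ =>
          Filter.limsup (fun n : ℕ =>
            ∫ ω, (∑ k ∈ Finset.Ioc m (K n),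
              empInt (P n) n (a n) (fun j => X n j ω) k (h k)) ^ 2 ∂Pr) atTop)
        atTop (𝓝 0) := by
  obtain ⟨-, ha, -, ha_lim, -⟩ := id h21
  exact tail_second_moment_vanishes_general μ a P ha ha_lim (fun _ => smul_le_of_assumption21 h21)
    Pr X (fun n j => (hXmeas n j).aemeasurable) hXlaw hXindep hdiag h hmem hH
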